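/- arXiv:0804.0756 — 2 statements merged into one kernel-verified Lean document; each statement's English description precedes it below -/
import Mathlib

section
/- Let K be a field, S = K[x_1,...,x_n,y_1,...,y_m], and let 0 < q < s ≤ n and 0 < r ≤ m. Then the quotient ring S/(I_q J_r + I_s) is Cohen-Macaulay if and only if s = q+1 and r = m, and in that case dim S/(I_q J_m + I_{q+1}) = m + q - 1. -/
/-!
The ideal `L = I_q J_r + I_s` is the Stanley–Reisner ideal of the simplicial complex `Δ` of all sets
`F` of variables which contain at most `q - 1` of the `x`'s, or at most `s - 1` of the `x`'s and at
most `r - 1` of the `y`'s (`ideal_eq_srIdeal`).  So `Δ = Δ_a ∪ Δ_b` with both pieces, and also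
`Δ_c = Δ_a ∩ Δ_b`, joins of skeleta of simplices.

*Dimension.*  `dim S/I_Δ` is the largest cardinality of a face (`card_le_ringKrullDim`,
`ringKrullDim_srIdeal_le`), so `dim S/L = max (m + q - 1) (s + r - 2)`.

*Depth.*  Depth is measured by the vanishing of `Ext^i(S/J, -)` for the irrelevant ideal `J`
(`ExtVanish`), which by Rees' theorem determines the lengths of regular sequences (`ringDepth_eq`).
Joins of skeleta are Cohen–Macaulay, by induction on the vertices (`extVanish_boundedComplex`), so
`S/I_{Δ_a}`, `S/I_{Δ_b}` and `S/I_{Δ_c}` have depths `m + q - 1`, `s + r - 2` and `q + r - 2`.  The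
last is strictly smaller than the other two, and the Mayer–Vietoris sequence
`0 → S/L → S/I_{Δ_a} × S/I_{Δ_b} → S/I_{Δ_c} → 0` gives `depth S/L = q + r - 1`
(`ringDepth_bigComplex`).

Hence `S/L` is Cohen–Macaulay if and only if `m + q - 1` and `s + r - 2` are both at most
`q + r - 1`, which means `r = m` and `s = q + 1`.
-/

open MvPolynomial

/-- `Iq K n m q` is the ideal of `S = K[x_1,…,x_n,y_1,…,y_m]` (realized as the polynomial
ring on `Fin (n+m)`, the first `n` indices being the `x`-variables) generated by all
square-free monomials of degree `q` in the `x`-variables.  For `q = 0` it is the unit ideal. -/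
noncomputable def Iq (K : Type) [Field K] (n m q : ℕ) : Ideal (MvPolynomial (Fin (n + m)) K) :=
  Ideal.span {f | ∃ s : Finset (Fin (n + m)), (∀ i ∈ s, (i : ℕ) < n) ∧ s.card = q ∧
    f = ∏ i ∈ s, X i}

/-- `Jr K n m r` is the ideal of `S = K[x_1,…,x_n,y_1,…,y_m]` generated by all square-free
monomials of degree `r` in the `y`-variables (the last `m` indices of `Fin (n+m)`).
For `r = 0` it is the unit ideal. -/
noncomputable def Jr (K : Type) [Field K] (n m r : ℕ) : Ideal (MvPolynomial (Fin (n + m)) K) :=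
  Ideal.span {f | ∃ s : Finset (Fin (n + m)), (∀ i ∈ s, n ≤ (i : ℕ)) ∧ s.card = r ∧
    f = ∏ i ∈ s, X i}



/-- `l : List R` is a regular sequence on `R`: each `l i` is a nonzerodivisor modulo the
ideal generated by the previous elements, and `l` generates a proper ideal. -/
def IsRegularSeq (R : Type) [CommRing R] (l : List R) : Prop :=
  (∀ (i : ℕ) (hi : i < l.length) (y : R),
      l.get ⟨i, hi⟩ * y ∈ Ideal.span {x | x ∈ l.take i} →
        y ∈ Ideal.span {x | x ∈ l.take i}) ∧
  Ideal.span {x | x ∈ l} ≠ ⊤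

/-- The depth of the ideal `J` on the ring `R`: the supremum of the lengths of regular
sequences on `R` consisting of elements of `J`. -/
noncomputable def ringDepth (R : Type) [CommRing R] (J : Ideal R) : ℕ∞ :=
  sSup {k : ℕ∞ | ∃ l : List R, (∀ x ∈ l, x ∈ J) ∧ IsRegularSeq R l ∧ (l.length : ℕ∞) = k}

/-- A (graded local) ring `R` with distinguished (irrelevant maximal) ideal `J` is
Cohen–Macaulay if `depth R = dim R`, the depth being taken with respect to `J`. -/
def IsCohenMacaulay (R : Type) [CommRing R] (J : Ideal R) : Prop :=
  (ringDepth R J : WithBot ℕ∞) = ringKrullDim R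

/-- The irrelevant maximal ideal of `S/L`, `S = K[x_1,…,x_N]`: the image in `S/L` of the
ideal generated by all the variables. -/
noncomputable def irrelevantMax (K : Type) [Field K] (N : ℕ)
    (L : Ideal (MvPolynomial (Fin N) K)) : Ideal (MvPolynomial (Fin N) K ⧸ L) :=
  Ideal.map (Ideal.Quotient.mk L) (Ideal.span (Set.range X))

/-! ### Vanishing of `Ext(S/J, -)` as a depth condition -/

section ExtDepth

open CategoryTheory Abelian

variable {S : Type} [CommRing S]

/-- `ExtVanish J k M` says that `Ext^i(S/J, M) = 0` for all `i < k`.  For finitely generated `M`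
over a Noetherian ring with `J M ≠ M` this means that the grade of `J` on `M` is at least `k`. -/
def ExtVanish (J : Ideal S) (k : ℕ) (M : Type) [AddCommGroup M] [Module S M] : Prop :=
  ∀ i < k, ∀ e : Ext (ModuleCat.of S (S ⧸ J)) (ModuleCat.of S M) i, e = 0

lemma ExtVanish.mono {J : Ideal S} {k l : ℕ} (h : k ≤ l) {M : Type} [AddCommGroup M] [Module S M]
    (H : ExtVanish J l M) : ExtVanish J k M :=
  fun i hi => H i (hi.trans_le h)

lemma extVanish_zero (J : Ideal S) (M : Type) [AddCommGroup M] [Module S M] :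
    ExtVanish J 0 M := fun _ hi => absurd hi (Nat.not_lt_zero _)

lemma smul_ext_eq_zero {J : Ideal S} {M : ModuleCat.{0} S} {x : S} (hx : x ∈ J) {i : ℕ}
    (e : Ext (ModuleCat.of S (S ⧸ J)) M i) : x • e = 0 := by
  have h0 : x • 𝟙 (ModuleCat.of S (S ⧸ J)) = 0 := by
    ext
    change x • (Submodule.Quotient.mk 1 : S ⧸ J) = 0
    rw [← Submodule.Quotient.mk_smul, Submodule.Quotient.mk_eq_zero]
    exact J.mul_mem_right _ hx
  have : x • e = (Ext.mk₀ (x • 𝟙 (ModuleCat.of S (S ⧸ J)))).comp e (zero_add i) := by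
    rw [Ext.mk₀_smul, Ext.smul_comp, Ext.mk₀_id_comp]
  rw [this, h0, Ext.mk₀_zero, Ext.zero_comp]

section LES

variable {J : Ideal S} {M₁ M₂ M₃ : Type} [AddCommGroup M₁] [Module S M₁] [AddCommGroup M₂]
  [Module S M₂] [AddCommGroup M₃] [Module S M₃] {f : M₁ →ₗ[S] M₂} {g : M₂ →ₗ[S] M₃}

lemma shortExact_of_linearMap (hf : Function.Injective f) (hfg : Function.Exact f g)
    (hg : Function.Surjective g) :
    (ModuleCat.shortComplexOfCompEqZero f g hfg.linearMap_comp_eq_zero).ShortExact :=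
  ModuleCat.shortComplex_shortExact _ hfg hf hg

lemma ExtVanish.mid (hf : Function.Injective f) (hfg : Function.Exact f g)
    (hg : Function.Surjective g) {k : ℕ} (h₁ : ExtVanish J k M₁) (h₃ : ExtVanish J k M₃) :
    ExtVanish J k M₂ := by
  intro i hi e
  have hS := shortExact_of_linearMap hf hfg hg
  obtain ⟨x, hx⟩ := Ext.covariant_sequence_exact₂ _ hS e (h₃ i hi _)
  rw [← hx, h₁ i hi x, Ext.zero_comp]

lemma ext_zero_eq_zero_of_comp_mono {X M N : ModuleCat.{0} S} (f : M ⟶ N) [Mono f]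
    (e : Ext X M 0) (h : e.comp (Ext.mk₀ f) (add_zero 0) = 0) : e = 0 := by
  apply Ext.postcomp_mk₀_injective_of_mono X f
  simpa using h

lemma ExtVanish.left (hf : Function.Injective f) (hfg : Function.Exact f g)
    (hg : Function.Surjective g) {k : ℕ} (h₂ : ExtVanish J (k + 1) M₂) (h₃ : ExtVanish J k M₃) :
    ExtVanish J (k + 1) M₁ := by
  intro i hi e
  have hS := shortExact_of_linearMap hf hfg hg
  rcases i with _ | i
  · have := hS.mono_f
    exact ext_zero_eq_zero_of_comp_mono (ModuleCat.shortComplexOfCompEqZero f g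
      hfg.linearMap_comp_eq_zero).f e (h₂ 0 hi _)
  · obtain ⟨x, hx⟩ := Ext.covariant_sequence_exact₁ _ hS e (h₂ _ hi _) rfl
    rw [← hx, h₃ i (by omega) x, Ext.zero_comp]

lemma ExtVanish.right (hf : Function.Injective f) (hfg : Function.Exact f g)
    (hg : Function.Surjective g) {k : ℕ} (h₁ : ExtVanish J (k + 1) M₁) (h₂ : ExtVanish J k M₂) :
    ExtVanish J k M₃ := by
  intro i hi e
  have hS := shortExact_of_linearMap hf hfg hg
  obtain ⟨x, hx⟩ := Ext.covariant_sequence_exact₃ _ hS e rfl (h₁ (i + 1) (by omega) _)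
  rw [← hx, h₂ i hi x, Ext.zero_comp]

/-- Multiplication by `x ∈ J` is zero on `Ext(S/J, -)`, so the long exact sequence of
`0 → M → M → M₃ → 0` breaks up and dividing by `x` costs exactly one degree. -/
lemma extVanish_succ_iff {x : S} (hx : x ∈ J) {g : M₁ →ₗ[S] M₃}
    (hf : Function.Injective (LinearMap.lsmul S M₁ x))
    (hfg : Function.Exact (LinearMap.lsmul S M₁ x) g)
    (hg : Function.Surjective g) {k : ℕ} :
    ExtVanish J (k + 1) M₁ ↔ ExtVanish J k M₃ := by
  refine ⟨fun h => ExtVanish.right hf hfg hg h (h.mono k.le_succ), fun h i hi e => ?_⟩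
  have hS := shortExact_of_linearMap hf hfg hg
  have h0 : e.comp (Ext.mk₀ (ModuleCat.shortComplexOfCompEqZero (LinearMap.lsmul S M₁ x) g
      hfg.linearMap_comp_eq_zero).f) (add_zero i) = 0 := by
    have := smul_ext_eq_zero hx e
    rw [Ext.smul_eq_comp_mk₀] at this
    exact this
  rcases i with _ | i
  · have := hS.mono_f
    exact ext_zero_eq_zero_of_comp_mono _ e h0
  · obtain ⟨y, hy⟩ := Ext.covariant_sequence_exact₁ _ hS e h0 rfl
    rw [← hy, h i (by omega) y, Ext.zero_comp]

lemma ExtVanish.prod {k : ℕ} (h₁ : ExtVanish J k M₁) (h₂ : ExtVanish J k M₂) :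
    ExtVanish J k (M₁ × M₂) :=
  ExtVanish.mid (f := LinearMap.inl S M₁ M₂) (g := LinearMap.snd S M₁ M₂)
    LinearMap.inl_injective Function.Exact.inl_snd LinearMap.snd_surjective h₁ h₂

end LES

/-- `x` is a nonzerodivisor modulo the ideal `L`. -/
def NzdMod (L : Ideal S) (x : S) : Prop := ∀ y, x * y ∈ L → y ∈ L

lemma extVanish_quotient_succ_iff {J L : Ideal S} {x : S} (hx : x ∈ J) (hr : NzdMod L x) {k : ℕ} :
    ExtVanish J (k + 1) (S ⧸ L) ↔ ExtVanish J k (S ⧸ (L ⊔ Ideal.span {x})) := by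
  refine extVanish_succ_iff hx (g := Submodule.factor (le_sup_left : L ≤ L ⊔ Ideal.span {x}))
    ?_ ?_ (Submodule.factor_surjective _)
  · rw [← LinearMap.ker_eq_bot, LinearMap.ker_eq_bot']
    intro m
    induction m using Submodule.Quotient.induction_on with
    | H y =>
      intro h
      rw [LinearMap.lsmul_apply, ← Submodule.Quotient.mk_smul, Submodule.Quotient.mk_eq_zero] at h
      rw [Submodule.Quotient.mk_eq_zero]
      exact hr y h
  · intro m
    induction m using Submodule.Quotient.induction_on with
    | H y =>
      change Submodule.Quotient.mk y = 0 ↔ _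
      rw [Submodule.Quotient.mk_eq_zero, Submodule.mem_sup]
      constructor
      · rintro ⟨l, hl, z, hz, rfl⟩
        obtain ⟨a, rfl⟩ := Ideal.mem_span_singleton'.1 hz
        refine ⟨Submodule.Quotient.mk a, ?_⟩
        rw [LinearMap.lsmul_apply, ← Submodule.Quotient.mk_smul]
        rw [Submodule.Quotient.eq, smul_eq_mul, show x * a - (l + a * x) = -l by ring]
        exact L.neg_mem hl
      · rintro ⟨a, ha⟩
        induction a using Submodule.Quotient.induction_on with
        | H a =>
          rw [LinearMap.lsmul_apply, ← Submodule.Quotient.mk_smul, Submodule.Quotient.eq,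
            smul_eq_mul] at ha
          exact ⟨y - x * a, by simpa using L.neg_mem ha, x * a,
            Ideal.mem_span_singleton'.2 ⟨a, mul_comm _ _⟩, by ring⟩

/-- If `Hom(S/J, S/L) = 0` with `J` maximal, then `J` is not an associated prime of `S/L`, so by
prime avoidance it contains a nonzerodivisor modulo `L`. -/
lemma exists_nzdMod [IsNoetherianRing S] {J L : Ideal S} (hJ : J.IsMaximal)
    (h : ExtVanish J 1 (S ⧸ L)) : ∃ x ∈ J, NzdMod L x := by
  by_contra! hcon
  have hsub : (J : Set S) ⊆ ⋃ p ∈ associatedPrimes S (S ⧸ L), (p : Set S) := by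
    intro x hx
    rw [biUnion_associatedPrimes_eq_compl_regular]
    intro hreg
    refine hcon x hx fun y hy => ?_
    rw [← Submodule.Quotient.mk_eq_zero (p := L)]
    have hreg' : Function.Injective (fun m : S ⧸ L => x • m) := hreg
    apply hreg'
    simp only [smul_zero]
    rw [← Submodule.Quotient.mk_smul, Submodule.Quotient.mk_eq_zero]
    exact hy
  have hfin : (associatedPrimes S (S ⧸ L)).Finite := associatedPrimes.finite S (S ⧸ L)
  obtain ⟨p, hp, hle⟩ := (Ideal.subset_union_prime_finite hfin (⊥ : Ideal S) (⊥ : Ideal S)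
    (fun p hp _ _ => hp.isPrime)).1 hsub
  have hpJ : J = p := hJ.eq_of_le hp.isPrime.ne_top hle
  subst hpJ
  obtain ⟨-, f, hf⟩ := (isAssociatedPrime_iff_exists_injective_linearMap _ _).1 hp
  have h0 : ModuleCat.ofHom f = 0 := by
    have := h 0 one_pos (Ext.mk₀ (ModuleCat.ofHom f))
    rwa [Ext.mk₀_eq_zero_iff] at this
  have h1 : f (Submodule.Quotient.mk 1) = 0 := by
    have h2 : f = 0 := by simpa using congrArg ModuleCat.Hom.hom h0
    rw [h2, LinearMap.zero_apply]
  have h2 := hf (h1.trans (map_zero f).symm)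
  rw [Submodule.Quotient.mk_eq_zero] at h2
  exact hJ.ne_top ((Ideal.eq_top_iff_one J).2 h2)

/-- Grade is bounded by dimension: a nonzerodivisor lowers both, the dimension by at least one. -/
lemma ExtVanish.le_ringKrullDim [IsNoetherianRing S] {J : Ideal S} (hJ : J.IsMaximal) :
    ∀ {k : ℕ} {L : Ideal S}, L ≤ J → ExtVanish J k (S ⧸ L) →
      (k : WithBot ℕ∞) ≤ ringKrullDim (S ⧸ L)
  | 0, L, hL, _ => by
    have : Nontrivial (S ⧸ L) :=
      Ideal.Quotient.nontrivial_iff.2 fun h => hJ.ne_top (top_le_iff.1 (h ▸ hL))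
    exact_mod_cast ringKrullDim_nonneg_of_nontrivial
  | k + 1, L, hL, h => by
    obtain ⟨x, hx, hr⟩ := exists_nzdMod hJ (h.mono (by omega))
    have ih := ExtVanish.le_ringKrullDim hJ (k := k) (L := L ⊔ Ideal.span {x})
      (sup_le hL ((Ideal.span_singleton_le_iff_mem J).2 hx))
      ((extVanish_quotient_succ_iff hx hr).1 h)
    have h1 : ringKrullDim (S ⧸ (L ⊔ Ideal.span {x})) + 1 ≤ ringKrullDim (S ⧸ L) := by
      refine ringKrullDim_succ_le_of_surjective
        (Ideal.Quotient.factor (le_sup_left : L ≤ L ⊔ Ideal.span {x}))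
        (Ideal.Quotient.factor_surjective _) (r := Ideal.Quotient.mk L x) ?_ ?_
      · rw [mem_nonZeroDivisors_iff_left]
        intro y hy
        obtain ⟨y, rfl⟩ := Ideal.Quotient.mk_surjective y
        rw [← map_mul, Ideal.Quotient.eq_zero_iff_mem] at hy
        exact Ideal.Quotient.eq_zero_iff_mem.2 (hr y hy)
      · rw [Ideal.Quotient.factor_mk, Ideal.Quotient.eq_zero_iff_mem]
        exact Ideal.mem_sup_right (Ideal.mem_span_singleton_self x)
    refine le_trans ?_ h1
    push_cast
    gcongr

/-- `l` is a weakly regular sequence on `S/L`. -/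
def RegMod : Ideal S → List S → Prop
  | _, [] => True
  | L, x :: l => NzdMod L x ∧ RegMod (L ⊔ Ideal.span {x}) l

/-- Rees' characterization of grade. -/
lemma extVanish_iff_exists_regMod [IsNoetherianRing S] {J : Ideal S} (hJ : J.IsMaximal) :
    ∀ {k : ℕ} {L : Ideal S}, ExtVanish J k (S ⧸ L) ↔
      ∃ l : List S, (∀ x ∈ l, x ∈ J) ∧ RegMod L l ∧ l.length = k
  | 0, L => ⟨fun _ => ⟨[], by simp, trivial, rfl⟩, fun _ => extVanish_zero _ _⟩
  | k + 1, L => by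
    constructor
    · intro h
      obtain ⟨x, hx, hr⟩ := exists_nzdMod hJ (h.mono (by omega))
      obtain ⟨l, hl, hreg, hlen⟩ := (extVanish_iff_exists_regMod hJ).1
        ((extVanish_quotient_succ_iff hx hr).1 h)
      exact ⟨x :: l, by simpa using ⟨hx, hl⟩, ⟨hr, hreg⟩, by simp [hlen]⟩
    · rintro ⟨l, hl, hreg, hlen⟩
      rcases l with _ | ⟨x, l⟩
      · simp at hlen
      · rw [List.forall_mem_cons] at hl
        exact (extVanish_quotient_succ_iff hl.1 hreg.1).2
          ((extVanish_iff_exists_regMod hJ).2 ⟨l, hl.2, hreg.2, by simpa using hlen⟩)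

lemma regMod_iff_getElem : ∀ {l : List S} {L : Ideal S},
    RegMod L l ↔ ∀ (i : ℕ) (hi : i < l.length), NzdMod (L ⊔ Ideal.span {x | x ∈ l.take i}) l[i]
  | [], L => by simp [RegMod]
  | x :: l, L => by
    rw [RegMod, regMod_iff_getElem]
    have key : ∀ i, L ⊔ Ideal.span {y | y ∈ (x :: l).take (i + 1)} =
        L ⊔ Ideal.span {x} ⊔ Ideal.span {y | y ∈ l.take i} := by
      intro i
      rw [sup_assoc, ← Ideal.span_union]
      congr 2
      ext y
      simp
    constructor
    · rintro ⟨h0, h⟩ (_ | i) hi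
      · simpa using h0
      · rw [key]
        exact h i (by simpa using hi)
    · intro h
      have h0 : NzdMod (L ⊔ Ideal.span {y | y ∈ (x :: l).take 0}) x := h 0 (by simp)
      refine ⟨by simpa using h0, fun i hi => ?_⟩
      rw [← key]
      exact h (i + 1) (by simpa using hi)

lemma isRegularSeq_map_mk_iff {J L : Ideal S} (hJ : J ≠ ⊤) (hL : L ≤ J) {l : List S}
    (hl : ∀ x ∈ l, x ∈ J) :
    IsRegularSeq (S ⧸ L) (l.map (Ideal.Quotient.mk L)) ↔ RegMod L l := by
  have key : ∀ (l : List S) (y : S), Ideal.Quotient.mk L y ∈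
      Ideal.span {x | x ∈ l.map (Ideal.Quotient.mk L)} ↔ y ∈ L ⊔ Ideal.span {x | x ∈ l} := by
    intro l y
    rw [sup_comm, ← Ideal.mem_quotient_iff_mem_sup, Ideal.map_span]
    have : {x | x ∈ l.map (Ideal.Quotient.mk L)} = Ideal.Quotient.mk L '' {x | x ∈ l} := by
      ext; simp
    rw [this]
  have htop : Ideal.span {x | x ∈ l.map (Ideal.Quotient.mk L)} ≠ ⊤ := by
    intro h
    have h1 : Ideal.Quotient.mk L 1 ∈ Ideal.span {x | x ∈ l.map (Ideal.Quotient.mk L)} := by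
      rw [h]; trivial
    rw [key] at h1
    exact hJ ((Ideal.eq_top_iff_one J).2 ((sup_le hL (Ideal.span_le.2 hl)) h1))
  rw [IsRegularSeq, and_iff_left htop, regMod_iff_getElem]
  constructor
  · intro h i hi y hy
    have := h i (by simpa using hi) (Ideal.Quotient.mk L y)
    rw [← List.map_take, key] at this
    refine this ?_
    rw [List.get_eq_getElem, List.getElem_map, ← map_mul, key]
    exact hy
  · intro h i hi y hy
    obtain ⟨y, rfl⟩ := Ideal.Quotient.mk_surjective y
    rw [← List.map_take, key]
    rw [← List.map_take, List.get_eq_getElem, List.getElem_map, ← map_mul, key] at hy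
    exact h i (by simpa using hi) y hy

lemma ringDepth_eq [IsNoetherianRing S] {J L : Ideal S} (hJ : J.IsMaximal) (hL : L ≤ J) {d : ℕ}
    (h₁ : ExtVanish J d (S ⧸ L)) (h₂ : ¬ ExtVanish J (d + 1) (S ⧸ L)) :
    ringDepth (S ⧸ L) (J.map (Ideal.Quotient.mk L)) = d := by
  apply le_antisymm
  · refine sSup_le ?_
    rintro _ ⟨l, hl, hreg, rfl⟩
    have : ∃ l' : List S, (∀ x ∈ l', x ∈ J) ∧ l'.map (Ideal.Quotient.mk L) = l := by
      clear hreg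
      induction l with
      | nil => exact ⟨[], by simp, rfl⟩
      | cons x l ih =>
        rw [List.forall_mem_cons] at hl
        obtain ⟨l', h1, h2⟩ := ih hl.2
        obtain ⟨y, hy, rfl⟩ := (Ideal.mem_map_iff_of_surjective _
          Ideal.Quotient.mk_surjective).1 hl.1
        exact ⟨y :: l', by simpa using ⟨hy, h1⟩, by simp [h2]⟩
    obtain ⟨l', hl', rfl⟩ := this
    rw [isRegularSeq_map_mk_iff hJ.ne_top hL hl'] at hreg
    have h3 := (extVanish_iff_exists_regMod hJ).2 ⟨l', hl', hreg, rfl⟩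
    rw [List.length_map, Nat.cast_le]
    by_contra! hlt
    exact h₂ (h3.mono hlt)
  · obtain ⟨l, hl, hreg, hlen⟩ := (extVanish_iff_exists_regMod hJ).1 h₁
    refine le_sSup ⟨l.map (Ideal.Quotient.mk L), ?_,
      (isRegularSeq_map_mk_iff hJ.ne_top hL hl).2 hreg, by simp [hlen]⟩
    intro x hx
    obtain ⟨y, hy, rfl⟩ := List.mem_map.1 hx
    exact Ideal.mem_map_of_mem _ (hl y hy)


end ExtDepth

/-! ### Stanley–Reisner ideals -/

section StanleyReisner

variable {σ : Type} [DecidableEq σ] (K : Type) [Field K]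

/-- The Stanley–Reisner ideal of a simplicial complex `Δ` on the vertex set `σ` (a lower set of
finite sets, possibly empty): the polynomials all of whose monomials have support outside `Δ`. -/
def srIdeal (Δ : LowerSet (Finset σ)) : Ideal (MvPolynomial σ K) where
  carrier := {f | ∀ m ∈ f.support, m.support ∉ Δ}
  zero_mem' := by simp
  add_mem' := by
    intro f g hf hg m hm
    rcases Finset.mem_union.1 (support_add hm) with h | h
    · exact hf m h
    · exact hg m h
  smul_mem' := by
    intro g f hf m hm hΔ
    rw [smul_eq_mul] at hm
    obtain ⟨a, -, b, hb, rfl⟩ := Finset.mem_add.1 (support_mul g f hm)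
    refine hf b hb (Δ.lower (Finsupp.support_mono ?_) hΔ)
    exact le_add_self

variable {K}

lemma mem_srIdeal {Δ : LowerSet (Finset σ)} {f : MvPolynomial σ K} :
    f ∈ srIdeal K Δ ↔ ∀ m ∈ f.support, m.support ∉ Δ := Iff.rfl

lemma monomial_mem_srIdeal {Δ : LowerSet (Finset σ)} {m : σ →₀ ℕ} (h : m.support ∉ Δ) (c : K) :
    monomial m c ∈ srIdeal K Δ := by
  intro m' hm'
  rw [Finset.mem_singleton.1 (support_monomial_subset hm')]
  exact h

lemma srIdeal_le {Δ : LowerSet (Finset σ)} {L : Ideal (MvPolynomial σ K)}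
    (h : ∀ m : σ →₀ ℕ, m.support ∉ Δ → monomial m (1 : K) ∈ L) : srIdeal K Δ ≤ L := by
  intro f hf
  rw [f.as_sum]
  refine L.sum_mem fun m hm => ?_
  rw [← mul_one (coeff m f), ← smul_eq_mul, ← smul_monomial, smul_eq_C_mul]
  exact L.mul_mem_left _ (h m (hf m hm))

lemma srIdeal_anti {Δ Δ' : LowerSet (Finset σ)} (h : Δ ≤ Δ') : srIdeal K Δ' ≤ srIdeal K Δ :=
  fun _ hf m hm hm' => hf m hm (h hm')

lemma srIdeal_union (Δ Δ' : LowerSet (Finset σ)) :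
    srIdeal K (Δ ⊔ Δ') = srIdeal K Δ ⊓ srIdeal K Δ' := by
  refine le_antisymm (le_inf (srIdeal_anti le_sup_left) (srIdeal_anti le_sup_right)) ?_
  rintro f ⟨h, h'⟩ m hm hm'
  rcases LowerSet.mem_sup_iff.1 hm' with h1 | h1
  · exact h m hm h1
  · exact h' m hm h1

lemma srIdeal_inter (Δ Δ' : LowerSet (Finset σ)) :
    srIdeal K (Δ ⊓ Δ') = srIdeal K Δ ⊔ srIdeal K Δ' := by
  refine le_antisymm (srIdeal_le fun m hm => ?_)
    (sup_le (srIdeal_anti inf_le_left) (srIdeal_anti inf_le_right))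
  rw [LowerSet.mem_inf_iff, not_and_or] at hm
  rcases hm with h | h
  · exact Ideal.mem_sup_left (monomial_mem_srIdeal h _)
  · exact Ideal.mem_sup_right (monomial_mem_srIdeal h _)

/-- The star of the vertex `a`: the faces `F` such that `F ∪ {a}` is a face. -/
def starAt (a : σ) (Δ : LowerSet (Finset σ)) : LowerSet (Finset σ) :=
  ⟨{F | insert a F ∈ Δ}, fun _ _ h hF => Δ.lower (Finset.insert_subset_insert a h) hF⟩

/-- The deletion of the vertex `a`: the faces not containing `a`. -/
def delAt (a : σ) (Δ : LowerSet (Finset σ)) : LowerSet (Finset σ) :=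
  ⟨{F | F ∈ Δ ∧ a ∉ F}, fun _ _ h hF => ⟨Δ.lower h hF.1, fun ha => hF.2 (h ha)⟩⟩

lemma mem_starAt {a : σ} {Δ : LowerSet (Finset σ)} {F : Finset σ} :
    F ∈ starAt a Δ ↔ insert a F ∈ Δ := Iff.rfl

omit [DecidableEq σ] in
lemma mem_delAt {a : σ} {Δ : LowerSet (Finset σ)} {F : Finset σ} :
    F ∈ delAt a Δ ↔ F ∈ Δ ∧ a ∉ F := Iff.rfl

lemma X_mul_mem_srIdeal_iff {a : σ} {Δ : LowerSet (Finset σ)} {f : MvPolynomial σ K} :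
    X a * f ∈ srIdeal K Δ ↔ f ∈ srIdeal K (starAt a Δ) := by
  have key : ∀ m : σ →₀ ℕ, (Finsupp.single a 1 + m).support = insert a m.support := by
    intro m
    ext i
    by_cases h : i = a
    · subst h; simp
    · simp [h]
  rw [mem_srIdeal, mem_srIdeal, support_X_mul]
  simp only [Finset.forall_mem_map, addLeftEmbedding_apply, key, mem_starAt]

lemma srIdeal_delAt (a : σ) (Δ : LowerSet (Finset σ)) :
    srIdeal K (delAt a Δ) = srIdeal K Δ ⊔ Ideal.span {X a} := by
  apply le_antisymm
  · refine srIdeal_le fun m hm => ?_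
    rw [mem_delAt, not_and_or, not_not] at hm
    rcases hm with h | h
    · exact Ideal.mem_sup_left (monomial_mem_srIdeal h _)
    · refine Ideal.mem_sup_right (Ideal.mem_span_singleton.2 (X_dvd_monomial.2 (Or.inr ?_)))
      exact Finsupp.mem_support_iff.1 h
  · refine sup_le (srIdeal_anti fun F hF => hF.1) ?_
    rw [Ideal.span_singleton_le_iff_mem]
    intro m hm
    rw [mem_delAt, not_and, not_not]
    intro _
    rw [support_X, Finset.mem_singleton] at hm
    simp [hm]

end StanleyReisner

/-! ### Exact sequences of quotients -/

section ExactQuotients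

variable {S : Type} [CommRing S]

/-- From the exact sequence `0 → S/(I : x) → S/I → S/(I + x) → 0`. -/
lemma extVanish_of_colon {J I I' I'' : Ideal S} {x : S} (h' : ∀ y, x * y ∈ I ↔ y ∈ I')
    (h'' : I'' = I ⊔ Ideal.span {x}) {k : ℕ} (H' : ExtVanish J k (S ⧸ I'))
    (H'' : ExtVanish J k (S ⧸ I'')) : ExtVanish J k (S ⧸ I) := by
  subst h''
  have hle : I' ≤ Submodule.comap (LinearMap.lsmul S S x) I := fun y hy => (h' y).2 hy
  refine ExtVanish.mid (f := Submodule.mapQ I' I (LinearMap.lsmul S S x) hle)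
    (g := Submodule.factor (le_sup_left : I ≤ I ⊔ Ideal.span {x})) ?_ ?_
    (Submodule.factor_surjective _) H' H''
  · rw [← LinearMap.ker_eq_bot, LinearMap.ker_eq_bot']
    intro m
    induction m using Submodule.Quotient.induction_on with
    | H y =>
      intro h
      change (Submodule.Quotient.mk (x * y) : S ⧸ I) = 0 at h
      rw [Submodule.Quotient.mk_eq_zero] at h
      rw [Submodule.Quotient.mk_eq_zero]
      exact (h' y).1 h
  · intro m
    induction m using Submodule.Quotient.induction_on with
    | H y =>
      change Submodule.Quotient.mk y = 0 ↔ _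
      rw [Submodule.Quotient.mk_eq_zero, Submodule.mem_sup]
      constructor
      · rintro ⟨l, hl, z, hz, rfl⟩
        obtain ⟨a, rfl⟩ := Ideal.mem_span_singleton'.1 hz
        refine ⟨Submodule.Quotient.mk a, ?_⟩
        change (Submodule.Quotient.mk (x * a) : S ⧸ I) = Submodule.Quotient.mk (l + a * x)
        rw [Submodule.Quotient.eq, show x * a - (l + a * x) = -l by ring]
        exact I.neg_mem hl
      · rintro ⟨a, ha⟩
        induction a using Submodule.Quotient.induction_on with
        | H a =>
          change (Submodule.Quotient.mk (x * a) : S ⧸ I) = Submodule.Quotient.mk y at ha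
          rw [Submodule.Quotient.eq] at ha
          exact ⟨y - x * a, by simpa using I.neg_mem ha, x * a,
            Ideal.mem_span_singleton'.2 ⟨a, mul_comm _ _⟩, by ring⟩

/-- The maps of the Mayer–Vietoris sequence `0 → S/(I ∩ I') → S/I × S/I' → S/(I + I') → 0`. -/
lemma mayerVietoris (I I' : Ideal S) :
    ∃ (f : (S ⧸ (I ⊓ I')) →ₗ[S] (S ⧸ I) × (S ⧸ I')) (g : (S ⧸ I) × (S ⧸ I') →ₗ[S] (S ⧸ (I ⊔ I'))),
      Function.Injective f ∧ Function.Exact f g ∧ Function.Surjective g := by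
  refine ⟨(Submodule.factor (inf_le_left : I ⊓ I' ≤ I)).prod
      (Submodule.factor (inf_le_right : I ⊓ I' ≤ I')),
    (Submodule.factor (le_sup_left : I ≤ I ⊔ I')).comp (LinearMap.fst S _ _) -
      (Submodule.factor (le_sup_right : I' ≤ I ⊔ I')).comp (LinearMap.snd S _ _), ?_, ?_, ?_⟩
  · rw [← LinearMap.ker_eq_bot, LinearMap.ker_eq_bot']
    intro m
    induction m using Submodule.Quotient.induction_on with
    | H y =>
      intro h
      have h1 := congrArg Prod.fst h
      have h2 := congrArg Prod.snd h
      change Submodule.Quotient.mk y = 0 at h1 h2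
      rw [Submodule.Quotient.mk_eq_zero] at h1 h2 ⊢
      exact ⟨h1, h2⟩
  · rintro ⟨a, b⟩
    induction a using Submodule.Quotient.induction_on with
    | H a =>
    induction b using Submodule.Quotient.induction_on with
    | H b =>
      change (Submodule.Quotient.mk a - Submodule.Quotient.mk b : S ⧸ (I ⊔ I')) = 0 ↔ _
      rw [← Submodule.Quotient.mk_sub, Submodule.Quotient.mk_eq_zero, Submodule.mem_sup]
      constructor
      · rintro ⟨u, hu, v, hv, huv⟩
        refine ⟨Submodule.Quotient.mk (a - u), Prod.ext ?_ ?_⟩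
        · change Submodule.Quotient.mk (a - u) = Submodule.Quotient.mk a
          rw [Submodule.Quotient.eq]
          simpa using I.neg_mem hu
        · change Submodule.Quotient.mk (a - u) = Submodule.Quotient.mk b
          rw [Submodule.Quotient.eq]
          have : a - u - b = v := by linear_combination -huv
          rwa [this]
      · rintro ⟨y, hy⟩
        induction y using Submodule.Quotient.induction_on with
        | H y =>
          have h1 := congrArg Prod.fst hy
          have h2 := congrArg Prod.snd hy
          change Submodule.Quotient.mk y = Submodule.Quotient.mk _ at h1 h2
          rw [Submodule.Quotient.eq] at h1 h2
          exact ⟨-(y - a), I.neg_mem h1, y - b, h2, by ring⟩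
  · intro m
    induction m using Submodule.Quotient.induction_on with
    | H y =>
      refine ⟨(Submodule.Quotient.mk y, 0), ?_⟩
      change (Submodule.Quotient.mk y : S ⧸ (I ⊔ I')) -
        Submodule.factor (le_sup_right : I' ≤ I ⊔ I') 0 =
        Submodule.Quotient.mk y
      rw [map_zero, sub_zero]

end ExactQuotients

/-! ### Depth of the complexes cut out by two cardinality bounds -/

section Skeleta

variable {σ : Type} [DecidableEq σ]

/-- The complex of all `F` disjoint from `Z` with at most `q` vertices in `A` and at most `r`
vertices in `B`: a join of a skeleton of the simplex on `A`, a skeleton of the simplex on `B`, and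
the full simplex on the remaining vertices. -/
def boundedComplex (A : Finset σ) (q : ℕ) (B : Finset σ) (r : ℕ) (Z : Finset σ) :
    LowerSet (Finset σ) :=
  ⟨{F | (F ∩ A).card ≤ q ∧ (F ∩ B).card ≤ r ∧ Disjoint F Z}, fun _ _ h hF =>
    ⟨(Finset.card_le_card (Finset.inter_subset_inter_right h)).trans hF.1,
      (Finset.card_le_card (Finset.inter_subset_inter_right h)).trans hF.2.1,
      Finset.disjoint_of_subset_left h hF.2.2⟩⟩

lemma mem_boundedComplex {A B Z F : Finset σ} {q r : ℕ} :
    F ∈ boundedComplex A q B r Z ↔ (F ∩ A).card ≤ q ∧ (F ∩ B).card ≤ r ∧ Disjoint F Z := Iff.rfl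

lemma boundedComplex_comm (A B Z : Finset σ) (q r : ℕ) :
    boundedComplex A q B r Z = boundedComplex B r A q Z := by
  ext F
  simp only [SetLike.mem_coe, mem_boundedComplex]
  tauto

lemma card_inter_erase {a : σ} {A : Finset σ} (F : Finset σ) (ha : a ∈ A) :
    (F ∩ A).card = (F ∩ A.erase a).card + if a ∈ F then 1 else 0 := by
  rw [Finset.inter_erase]
  split_ifs with h
  · exact (Finset.card_erase_add_one (Finset.mem_inter.2 ⟨h, ha⟩)).symm
  · rw [Finset.erase_eq_of_notMem (by simp [h]), add_zero]

variable {A B Z : Finset σ} {q r : ℕ} {a : σ}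

lemma starAt_boundedComplex (ha : a ∈ A) (haB : a ∉ B) (haZ : a ∉ Z) :
    starAt a (boundedComplex A (q + 1) B r Z) = boundedComplex (A.erase a) q B r Z := by
  ext F
  simp only [SetLike.mem_coe, mem_starAt, mem_boundedComplex]
  rw [card_inter_erase _ ha, Finset.insert_inter_of_notMem haB,
    Finset.insert_inter_of_notMem (Finset.notMem_erase a A), Finset.disjoint_insert_left]
  simp [haZ]

lemma delAt_boundedComplex (ha : a ∈ A) :
    delAt a (boundedComplex A q B r Z) = boundedComplex (A.erase a) q B r (insert a Z) := by
  ext F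
  simp only [SetLike.mem_coe, mem_delAt, mem_boundedComplex, Finset.disjoint_insert_right]
  rw [card_inter_erase _ ha]
  by_cases h : a ∈ F
  · simp [h]
  · simp [h]

lemma boundedComplex_zero (ha : a ∈ A) :
    boundedComplex A 0 B r Z = boundedComplex (A.erase a) 0 B r (insert a Z) := by
  ext F
  simp only [SetLike.mem_coe, mem_boundedComplex, Finset.disjoint_insert_right]
  rw [card_inter_erase _ ha]
  by_cases h : a ∈ F
  · simp [h]
  · simp [h]

lemma boundedComplex_card (ha : a ∈ A) (hq : A.card = q + 1) :
    boundedComplex A (q + 1) B r Z = boundedComplex (A.erase a) q B r Z := by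
  ext F
  simp only [SetLike.mem_coe, mem_boundedComplex]
  have h1 : (F ∩ A).card ≤ q + 1 := hq ▸ Finset.card_le_card Finset.inter_subset_right
  have h2 : (F ∩ A.erase a).card ≤ q := by
    have := Finset.card_erase_of_mem ha
    have h3 : (F ∩ A.erase a).card ≤ (A.erase a).card :=
      Finset.card_le_card Finset.inter_subset_right
    omega
  simp [h1, h2]

variable {K : Type} [Field K] [Fintype σ]

lemma extVanish_simplex {J : Ideal (MvPolynomial σ K)} (hX : ∀ i, X i ∈ J) :
    ∀ (d : ℕ) (Z : Finset σ), d + Z.card = Fintype.card σ →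
      ExtVanish J d (MvPolynomial σ K ⧸ srIdeal K (boundedComplex ∅ 0 ∅ 0 Z))
  | 0, _, _ => extVanish_zero _ _
  | d + 1, Z, h => by
    obtain ⟨a, ha⟩ : ∃ a, a ∉ Z := by
      by_contra! hcon
      rw [Finset.eq_univ_of_forall hcon, Finset.card_univ] at h
      omega
    have hd : delAt a (boundedComplex ∅ 0 ∅ 0 Z) = boundedComplex ∅ 0 ∅ 0 (insert a Z) := by
      ext F
      simp [mem_delAt, mem_boundedComplex, Finset.disjoint_insert_right, and_comm]
    -- A vertex `a` outside `Z` is a cone point, so `X a` is regular; dividing it out deletes `a`.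
    refine (extVanish_quotient_succ_iff (hX a) (x := X a) ?_).2 ?_
    · intro y hy
      rw [X_mul_mem_srIdeal_iff] at hy
      refine srIdeal_anti ?_ hy
      intro F hF
      simpa [mem_starAt, mem_boundedComplex, Finset.disjoint_insert_left, ha] using hF
    · rw [← srIdeal_delAt, hd]
      refine extVanish_simplex hX d _ ?_
      rw [Finset.card_insert_of_notMem ha]
      omega

/-- The grade of the Stanley–Reisner ring is at least its dimension `d`.  The complexes
`boundedComplex` are vertex decomposable: the star and the deletion of a vertex of `A` are complexes
of the same kind with fewer constrained vertices, and `S/(I_Δ : x_a)`, `S/(I_Δ + x_a)` are their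
Stanley–Reisner rings. -/
lemma extVanish_boundedComplex {J : Ideal (MvPolynomial σ K)} (hX : ∀ i, X i ∈ J) :
    ∀ (N : ℕ) (A B Z : Finset σ) (q r d : ℕ), A.card + B.card = N → Disjoint A B →
      Disjoint A Z → Disjoint B Z → q ≤ A.card → r ≤ B.card →
      d + A.card + B.card + Z.card = Fintype.card σ + q + r →
      ExtVanish J d (MvPolynomial σ K ⧸ srIdeal K (boundedComplex A q B r Z)) := by
  intro N
  induction N with
  | zero =>
    intro A B Z q r d hN _ _ _ hq hr hd
    obtain ⟨hA, hB⟩ : A.card = 0 ∧ B.card = 0 := by omega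
    obtain rfl : q = 0 := by omega
    obtain rfl : r = 0 := by omega
    rw [Finset.card_eq_zero] at hA hB
    subst hA hB
    exact extVanish_simplex hX d Z (by simpa using hd)
  | succ N ih =>
    intro A B Z q r d hN hAB hAZ hBZ hq hr hd
    wlog hA : A.Nonempty generalizing A B q r
    · rw [boundedComplex_comm]
      refine this B A r q (by omega) hAB.symm hBZ hAZ hr hq (by omega) ?_
      rw [Finset.not_nonempty_iff_eq_empty] at hA
      rw [← Finset.card_pos]
      simp only [hA, Finset.card_empty] at hN
      omega
    obtain ⟨a, ha⟩ := hA
    have haB : a ∉ B := Finset.disjoint_left.1 hAB ha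
    have haZ : a ∉ Z := Finset.disjoint_left.1 hAZ ha
    have hc : (A.erase a).card + 1 = A.card := Finset.card_erase_add_one ha
    have hc' : (insert a Z).card = Z.card + 1 := Finset.card_insert_of_notMem haZ
    have hAB' : Disjoint (A.erase a) B := Finset.disjoint_of_subset_left (A.erase_subset a) hAB
    have hAZ' : Disjoint (A.erase a) Z := Finset.disjoint_of_subset_left (A.erase_subset a) hAZ
    have hAZ'' : Disjoint (A.erase a) (insert a Z) := by
      rw [Finset.disjoint_insert_right]
      exact ⟨Finset.notMem_erase a A, hAZ'⟩
    have hBZ'' : Disjoint B (insert a Z) := by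
      rw [Finset.disjoint_insert_right]
      exact ⟨haB, hBZ⟩
    rcases q with _ | q
    · rw [boundedComplex_zero ha]
      exact ih _ _ _ _ _ _ (by omega) hAB' hAZ'' hBZ'' (by omega) hr (by omega)
    by_cases hqA : A.card = q + 1
    · rw [boundedComplex_card ha hqA]
      exact ih _ _ _ _ _ _ (by omega) hAB' hAZ' hBZ (by omega) hr (by omega)
    · refine extVanish_of_colon (x := X a) (fun y => X_mul_mem_srIdeal_iff)
        (srIdeal_delAt a _) ?_ ?_
      · rw [starAt_boundedComplex ha haB haZ]
        exact ih _ _ _ _ _ _ (by omega) hAB' hAZ' hBZ (by omega) hr (by omega)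
      · rw [delAt_boundedComplex ha]
        exact ih _ _ _ _ _ _ (by omega) hAB' hAZ'' hBZ'' (by omega) hr (by omega)

end Skeleta

/-! ### Krull dimension of Stanley–Reisner rings -/

section KrullDim

variable {σ : Type} [DecidableEq σ] {K : Type} [Field K]

omit [DecidableEq σ] in
lemma ringKrullDim_mvPolynomial_finset (F : Finset σ) :
    ringKrullDim (MvPolynomial F K) = (F.card : WithBot ℕ∞) := by
  rw [MvPolynomial.ringKrullDim_of_isNoetherianRing, ringKrullDim_eq_zero_of_field, zero_add]
  simp

/-- Setting the variables outside a face `F` to zero maps `K[Δ]` onto `K[x_i : i ∈ F]`. -/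
lemma card_le_ringKrullDim {Δ : LowerSet (Finset σ)} {F : Finset σ} (hF : F ∈ Δ) :
    (F.card : WithBot ℕ∞) ≤ ringKrullDim (MvPolynomial σ K ⧸ srIdeal K Δ) := by
  let φ : MvPolynomial σ K →ₐ[K] MvPolynomial F K :=
    aeval fun i => if h : i ∈ F then X ⟨i, h⟩ else 0
  have hφ : ∀ f ∈ srIdeal K Δ, φ.toRingHom f = 0 := by
    suffices h : srIdeal K Δ ≤ RingHom.ker φ.toRingHom from fun f hf => h hf
    refine srIdeal_le fun m hm => ?_
    obtain ⟨i, him, hiF⟩ : ∃ i ∈ m.support, i ∉ F :=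
      Finset.not_subset.1 fun h => hm (Δ.lower h hF)
    have hX : X i ∈ RingHom.ker φ.toRingHom := by
      change aeval _ _ = 0
      rw [aeval_X, dif_neg hiF]
    exact Ideal.mem_of_dvd _ (X_dvd_monomial.2 (Or.inr (Finsupp.mem_support_iff.1 him))) hX
  rw [← ringKrullDim_mvPolynomial_finset (K := K)]
  refine ringKrullDim_le_of_surjective (Ideal.Quotient.lift _ φ.toRingHom hφ)
    (Ideal.Quotient.lift_surjective_of_surjective _ hφ fun p => ⟨rename Subtype.val p, ?_⟩)
  change aeval _ (rename _ p) = p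
  rw [aeval_rename]
  convert aeval_X_left_apply p using 3
  ext i
  simp

lemma prod_X_mem_srIdeal {Δ : LowerSet (Finset σ)} {F : Finset σ}
    (h : F ∉ Δ) :
    (∏ i ∈ F, X i : MvPolynomial σ K) ∈ srIdeal K Δ := by
  let a : σ →₀ ℕ := ∑ i ∈ F, Finsupp.single i 1
  have ha : a.support = F := by
    ext i
    simp [a, Finsupp.finsetSum_apply, Finsupp.single_apply]
  have h2 : (∏ i ∈ F, X i : MvPolynomial σ K) = monomial a 1 := by
    simp only [X, a]
    rw [monomial_sum_one]
  rw [h2]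
  exact monomial_mem_srIdeal (by rwa [ha]) 1

/-- The variables outside a prime `P ⊇ I_Δ` form a face `F`, and they generate `K[Δ]/P`. -/
lemma ringKrullDim_quotient_prime_le {Δ : LowerSet (Finset σ)} [Fintype σ] {d : ℕ}
    (hd : ∀ F ∈ Δ, F.card ≤ d) {P : Ideal (MvPolynomial σ K)} (hP : P.IsPrime)
    (hle : srIdeal K Δ ≤ P) : ringKrullDim (MvPolynomial σ K ⧸ P) ≤ d := by
  classical
  let F : Finset σ := Finset.univ.filter fun i => X i ∉ P
  have hF : F ∈ Δ := by
    by_contra hF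
    have h1 := hle (prod_X_mem_srIdeal hF)
    rw [hP.prod_mem_iff] at h1
    obtain ⟨i, hi, hiP⟩ := h1
    exact (Finset.mem_filter.1 hi).2 hiP
  let ψ : MvPolynomial F K →+* MvPolynomial σ K ⧸ P :=
    (Ideal.Quotient.mk P).comp (rename Subtype.val).toRingHom
  have hψ : Function.Surjective ψ := by
    rw [← RingHom.range_eq_top, eq_top_iff]
    rintro x -
    obtain ⟨p, rfl⟩ := Ideal.Quotient.mk_surjective x
    induction p using MvPolynomial.induction_on with
    | C c => exact ⟨C c, by simp [ψ]⟩
    | add p p' hp hp' =>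
      rw [map_add]
      exact add_mem hp hp'
    | mul_X p i hp =>
      rw [map_mul]
      refine mul_mem hp ?_
      by_cases hi : X i ∈ P
      · rw [Ideal.Quotient.eq_zero_iff_mem.2 hi]
        exact zero_mem _
      · exact ⟨X ⟨i, Finset.mem_filter.2 ⟨Finset.mem_univ i, hi⟩⟩, by simp [ψ]⟩
  refine (ringKrullDim_le_of_surjective ψ hψ).trans ?_
  rw [ringKrullDim_mvPolynomial_finset]
  exact_mod_cast hd F hF

/-- Every chain of primes over `I` lies over its smallest element. -/
lemma ringKrullDim_quotient_le_of_primes {R : Type} [CommRing R] {I : Ideal R} {d : ℕ}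
    (h : ∀ P : Ideal R, P.IsPrime → I ≤ P → ringKrullDim (R ⧸ P) ≤ d) :
    ringKrullDim (R ⧸ I) ≤ d := by
  rw [ringKrullDim_quotient]
  refine iSup_le fun p => ?_
  have h0 := h p.head.1.asIdeal p.head.1.isPrime p.head.2
  rw [ringKrullDim_quotient] at h0
  refine le_trans ?_ h0
  let p' : LTSeries (PrimeSpectrum.zeroLocus (R := R) (p.head.1.asIdeal : Set R)) :=
    { length := p.length
      toFun := fun i => ⟨(p i).1, fun x hx => p.head_le i hx⟩
      step := fun i => p.step i }
  exact le_iSup (fun q : LTSeries (PrimeSpectrum.zeroLocus (R := R) (p.head.1.asIdeal : Set R)) =>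
    (q.length : WithBot ℕ∞)) p'

lemma ringKrullDim_srIdeal_le [Fintype σ] {Δ : LowerSet (Finset σ)} {d : ℕ}
    (hd : ∀ F ∈ Δ, F.card ≤ d) :
    ringKrullDim (MvPolynomial σ K ⧸ srIdeal K Δ) ≤ d :=
  ringKrullDim_quotient_le_of_primes fun _ hP hle => ringKrullDim_quotient_prime_le hd hP hle

omit [DecidableEq σ] in
lemma isMaximal_span_range_X :
    (Ideal.span (Set.range (X : σ → MvPolynomial σ K))).IsMaximal := by
  have h : Ideal.span (Set.range (X : σ → MvPolynomial σ K)) =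
      RingHom.ker (constantCoeff (σ := σ) (R := K)) := by
    apply le_antisymm
    · rw [Ideal.span_le]
      rintro _ ⟨i, rfl⟩
      exact constantCoeff_X K i
    · intro f hf
      rw [← Set.image_univ, mem_ideal_span_X_image]
      intro m hm
      by_contra! hcon
      obtain rfl : m = 0 := by
        ext i
        exact hcon i trivial
      exact mem_support_iff.1 hm hf
  rw [h]
  exact RingHom.ker_isMaximal_of_surjective _ fun c => ⟨C c, constantCoeff_C _ c⟩

lemma srIdeal_le_span_range_X {Δ : LowerSet (Finset σ)} (h : ∅ ∈ Δ) :
    srIdeal K Δ ≤ Ideal.span (Set.range X) := by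
  refine srIdeal_le fun m hm => ?_
  obtain ⟨i, hi⟩ : m.support.Nonempty := by
    rw [Finset.nonempty_iff_ne_empty]
    rintro h0
    exact hm (h0 ▸ h)
  exact Ideal.mem_of_dvd _ (X_dvd_monomial.2 (Or.inr (Finsupp.mem_support_iff.1 hi)))
    (Ideal.subset_span ⟨i, rfl⟩)

end KrullDim

/-! ### The ideal `I_q J_r + I_s` and its complex -/

section Main

variable {K : Type} [Field K] {n m q r s : ℕ}

/-- The `x`-variables. -/
def xVars (n m : ℕ) : Finset (Fin (n + m)) := Finset.univ.filter fun i => (i : ℕ) < n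

/-- The `y`-variables. -/
def yVars (n m : ℕ) : Finset (Fin (n + m)) := Finset.univ.filter fun i => n ≤ (i : ℕ)

lemma yVars_eq : yVars n m = (xVars n m)ᶜ := by
  ext i
  simp [xVars, yVars]

lemma card_xVars : (xVars n m).card = n := by
  rw [xVars, Fin.card_filter_val_lt]
  omega

lemma card_yVars : (yVars n m).card = m := by
  rw [yVars_eq, Finset.card_compl, card_xVars, Fintype.card_fin]
  omega

lemma card_eq_add (F : Finset (Fin (n + m))) :
    F.card = (F ∩ xVars n m).card + (F ∩ yVars n m).card := by
  rw [yVars_eq, ← Finset.sdiff_eq_inter_compl, Finset.card_inter_add_card_sdiff]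

/-- The complex of `I_{q+1} J_{r+1} + I_{s+1}`, for `q ≤ s`: the union of the complex of the `F`
with at most `s` of the `x`'s and at most `r` of the `y`'s, and the complex of the `F` with at most
`q` of the `x`'s. -/
def bigComplex (n m q r s : ℕ) : LowerSet (Finset (Fin (n + m))) :=
  boundedComplex (xVars n m) s (yVars n m) r ∅ ⊔ boundedComplex (xVars n m) q ∅ 0 ∅

lemma mem_bigComplex {F : Finset (Fin (n + m))} :
    F ∈ bigComplex n m q r s ↔ ((F ∩ xVars n m).card ≤ s ∧ (F ∩ yVars n m).card ≤ r) ∨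
      (F ∩ xVars n m).card ≤ q := by
  simp [bigComplex, LowerSet.mem_sup_iff, mem_boundedComplex]

lemma prod_X_dvd_monomial {σ : Type} [DecidableEq σ] {F : Finset σ} {a : σ →₀ ℕ}
    (h : F ⊆ a.support) : (∏ i ∈ F, X i : MvPolynomial σ K) ∣ monomial a 1 := by
  rw [monomial_eq, C_1, one_mul, Finsupp.prod]
  refine (Finset.prod_dvd_prod_of_dvd _ _ fun i hi => ?_).trans
    (Finset.prod_dvd_prod_of_subset _ _ _ h)
  exact dvd_pow_self _ (Finsupp.mem_support_iff.1 (h hi))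

lemma ideal_eq_srIdeal (hqs : q ≤ s) :
    Iq K n m (q + 1) * Jr K n m (r + 1) + Iq K n m (s + 1) =
      srIdeal K (bigComplex n m q r s) := by
  apply le_antisymm
  · refine sup_le ?_ ?_
    · rw [Iq, Jr, Ideal.span_mul_span', Ideal.span_le]
      rintro _ ⟨_, ⟨A, hA, hAc, rfl⟩, _, ⟨B, hB, hBc, rfl⟩, rfl⟩
      have hAx : A ⊆ xVars n m := fun i hi => by simp [xVars, hA i hi]
      have hBy : B ⊆ yVars n m := fun i hi => by simp [yVars, hB i hi]
      have hd : Disjoint A B := Finset.disjoint_left.2 fun i hi hi' =>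
        absurd (hA i hi) (not_lt.2 (hB i hi'))
      change (∏ i ∈ A, X i) * ∏ i ∈ B, X i ∈ srIdeal K _
      rw [← Finset.prod_union hd]
      refine prod_X_mem_srIdeal ?_
      rw [mem_bigComplex]
      have h1 : A.card ≤ ((A ∪ B) ∩ xVars n m).card :=
        Finset.card_le_card (Finset.subset_inter Finset.subset_union_left hAx)
      have h2 : B.card ≤ ((A ∪ B) ∩ yVars n m).card :=
        Finset.card_le_card (Finset.subset_inter Finset.subset_union_right hBy)
      omega
    · rw [Iq, Ideal.span_le]
      rintro _ ⟨A, hA, hAc, rfl⟩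
      have hAx : A ⊆ xVars n m := fun i hi => by simp [xVars, hA i hi]
      refine prod_X_mem_srIdeal ?_
      rw [mem_bigComplex, Finset.inter_eq_left.2 hAx]
      omega
  · refine srIdeal_le fun a ha => ?_
    rw [mem_bigComplex, not_or, not_and_or] at ha
    have hI : ∀ k, k ≤ (a.support ∩ xVars n m).card → ∃ A ⊆ a.support, A ⊆ xVars n m ∧
        (∏ i ∈ A, X i) ∈ Iq K n m k := by
      intro k hk
      obtain ⟨A, hA, hAc⟩ := Finset.exists_subset_card_eq hk
      have hAx := hA.trans Finset.inter_subset_right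
      exact ⟨A, hA.trans Finset.inter_subset_left, hAx,
        Ideal.subset_span ⟨A, fun i hi => (Finset.mem_filter.1 (hAx hi)).2, hAc, rfl⟩⟩
    have hJ : ∀ k, k ≤ (a.support ∩ yVars n m).card → ∃ A ⊆ a.support, A ⊆ yVars n m ∧
        (∏ i ∈ A, X i) ∈ Jr K n m k := by
      intro k hk
      obtain ⟨A, hA, hAc⟩ := Finset.exists_subset_card_eq hk
      have hAx := hA.trans Finset.inter_subset_right
      exact ⟨A, hA.trans Finset.inter_subset_left, hAx,
        Ideal.subset_span ⟨A, fun i hi => (Finset.mem_filter.1 (hAx hi)).2, hAc, rfl⟩⟩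
    by_cases hs : s + 1 ≤ (a.support ∩ xVars n m).card
    · obtain ⟨A, hA, -, hmem⟩ := hI _ hs
      exact Ideal.mem_sup_right (Ideal.mem_of_dvd _ (prod_X_dvd_monomial hA) hmem)
    · obtain ⟨A, hA, hAx, hmem⟩ := hI (q + 1) (by omega)
      obtain ⟨B, hB, hBy, hmem'⟩ := hJ (r + 1) (by omega)
      refine Ideal.mem_sup_left (Ideal.mem_of_dvd _ ?_ (Ideal.mul_mem_mul hmem hmem'))
      rw [yVars_eq] at hBy
      rw [← Finset.prod_union (Finset.disjoint_of_subset_left hAx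
        (Finset.disjoint_of_subset_right hBy disjoint_compl_right))]
      exact prod_X_dvd_monomial (Finset.union_subset hA hB)

lemma exists_card_inter {a b : ℕ} (ha : a ≤ n) (hb : b ≤ m) : ∃ F : Finset (Fin (n + m)),
    (F ∩ xVars n m).card = a ∧ (F ∩ yVars n m).card = b ∧ F.card = a + b := by
  obtain ⟨A, hA, rfl⟩ := Finset.exists_subset_card_eq (ha.trans_eq (card_xVars (m := m)).symm)
  obtain ⟨B, hB, rfl⟩ := Finset.exists_subset_card_eq (hb.trans_eq (card_yVars (n := n)).symm)
  have hd : Disjoint (xVars n m) (yVars n m) := by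
    rw [yVars_eq]
    exact disjoint_compl_right
  have h1 : (A ∪ B) ∩ xVars n m = A := by
    rw [Finset.union_inter_distrib_right, Finset.inter_eq_left.2 hA,
      Finset.disjoint_iff_inter_eq_empty.1
        (Finset.disjoint_of_subset_left hB hd.symm), Finset.union_empty]
  have h2 : (A ∪ B) ∩ yVars n m = B := by
    rw [Finset.union_inter_distrib_right, Finset.inter_eq_left.2 hB,
      Finset.disjoint_iff_inter_eq_empty.1
        (Finset.disjoint_of_subset_left hA hd), Finset.empty_union]
  exact ⟨A ∪ B, by rw [h1], by rw [h2], by rw [card_eq_add, h1, h2]⟩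

/-- The two kinds of facets of `bigComplex` have `m + q` and `s + r` vertices. -/
lemma ringKrullDim_bigComplex (hqs : q < s) (hsn : s < n) (hrm : r < m) :
    ringKrullDim (MvPolynomial (Fin (n + m)) K ⧸ srIdeal K (bigComplex n m q r s)) =
      ((max (m + q) (s + r) : ℕ) : WithBot ℕ∞) := by
  apply le_antisymm
  · refine ringKrullDim_srIdeal_le fun F hF => ?_
    rw [mem_bigComplex] at hF
    have h1 := card_eq_add F
    have h2 : (F ∩ yVars n m).card ≤ m :=
      (Finset.card_le_card Finset.inter_subset_right).trans_eq card_yVars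
    omega
  · rcases max_choice (m + q) (s + r) with h | h
    · obtain ⟨F, h1, h2, h3⟩ := exists_card_inter (n := n) (m := m) (a := q) (b := m)
        (by omega) (by omega)
      rw [h, add_comm, ← h3]
      exact card_le_ringKrullDim (mem_bigComplex.2 (Or.inr h1.le))
    · obtain ⟨F, h1, h2, h3⟩ := exists_card_inter (n := n) (m := m) (a := s) (b := r)
        (by omega) (by omega)
      rw [h, ← h3]
      exact card_le_ringKrullDim (mem_bigComplex.2 (Or.inl ⟨h1.le, h2.le⟩))

/-- The depth is read off the Mayer–Vietoris sequence of the decomposition of `bigComplex` into two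
skeleta, whose intersection has the smallest depth of the three. -/
lemma ringDepth_bigComplex (hqs : q < s) (hsn : s < n) (hrm : r < m) :
    ringDepth (MvPolynomial (Fin (n + m)) K ⧸ srIdeal K (bigComplex n m q r s))
      (irrelevantMax K (n + m) (srIdeal K (bigComplex n m q r s))) = ((q + r + 1 : ℕ) : ℕ∞) := by
  have hX : ∀ i : Fin (n + m), (X i : MvPolynomial (Fin (n + m)) K) ∈
      Ideal.span (Set.range (X : Fin (n + m) → MvPolynomial (Fin (n + m)) K)) :=
    fun i => Ideal.subset_span ⟨i, rfl⟩
  have hJ := isMaximal_span_range_X (σ := Fin (n + m)) (K := K)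
  have hd : Disjoint (xVars n m) (yVars n m) := by
    rw [yVars_eq]
    exact disjoint_compl_right
  have hx := card_xVars (n := n) (m := m)
  have hy := card_yVars (n := n) (m := m)
  have hb := extVanish_boundedComplex hX _ (xVars n m) (yVars n m) ∅ s r (s + r) rfl hd
    (Finset.disjoint_empty_right _) (Finset.disjoint_empty_right _) (by omega) (by omega)
    (by simp only [hx, hy, Finset.card_empty, Fintype.card_fin]; omega)
  have ha := extVanish_boundedComplex hX _ (xVars n m) ∅ ∅ q 0 (m + q) rfl
    (Finset.disjoint_empty_right _)
    (Finset.disjoint_empty_right _) (Finset.disjoint_empty_right _) (by omega) (by omega)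
    (by simp only [hx, Finset.card_empty, Fintype.card_fin]; omega)
  have hinter : boundedComplex (xVars n m) s (yVars n m) r ∅ ⊓ boundedComplex (xVars n m) q ∅ 0 ∅ =
      boundedComplex (xVars n m) q (yVars n m) r ∅ := by
    ext F
    simp only [SetLike.mem_coe, LowerSet.mem_inf_iff, mem_boundedComplex, Finset.inter_empty,
      Finset.card_empty, Finset.disjoint_empty_right, le_refl, and_true]
    omega
  have hc := extVanish_boundedComplex hX _ (xVars n m) (yVars n m) ∅ q r (q + r) rfl hd
    (Finset.disjoint_empty_right _) (Finset.disjoint_empty_right _) (by omega) (by omega)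
    (by simp only [hx, hy, Finset.card_empty, Fintype.card_fin]; omega)
  have hempty : ∀ (A B : Finset (Fin (n + m))) (q r : ℕ), ∅ ∈ boundedComplex A q B r ∅ := by
    intro A B q r
    simp [mem_boundedComplex]
  -- The intersection has dimension `q + r`, which bounds its grade from above.
  have hc' : ¬ ExtVanish (Ideal.span (Set.range (X : Fin (n + m) → MvPolynomial (Fin (n + m)) K)))
      (q + r + 1)
      (MvPolynomial (Fin (n + m)) K ⧸
        srIdeal K (boundedComplex (xVars n m) q (yVars n m) r ∅)) := by
    intro h
    have h1 := ExtVanish.le_ringKrullDim hJ (srIdeal_le_span_range_X (hempty _ _ _ _)) h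
    have h2 : ringKrullDim (MvPolynomial (Fin (n + m)) K ⧸
        srIdeal K (boundedComplex (xVars n m) q (yVars n m) r ∅)) ≤ ((q + r : ℕ) : WithBot ℕ∞) := by
      refine ringKrullDim_srIdeal_le fun F hF => ?_
      rw [mem_boundedComplex] at hF
      have h1 := card_eq_add F
      omega
    have h3 := h1.trans h2
    norm_cast at h3
    omega
  obtain ⟨f, g, hf, hfg, hg⟩ := mayerVietoris
    (srIdeal K (boundedComplex (xVars n m) s (yVars n m) r ∅))
    (srIdeal K (boundedComplex (xVars n m) q ∅ 0 ∅))
  rw [← hinter, srIdeal_inter] at hc hc'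
  have hle : srIdeal K (bigComplex n m q r s) ≤ Ideal.span (Set.range X) :=
    srIdeal_le_span_range_X (mem_bigComplex.2 (Or.inr (by simp)))
  rw [bigComplex, srIdeal_union] at hle ⊢
  -- Both skeleta have larger depth, as `s > q` and `m > r`.
  have hp := (hb.mono (k := q + r + 1) (by omega)).prod (ha.mono (k := q + r + 1) (by omega))
  exact ringDepth_eq hJ hle (ExtVanish.left hf hfg hg hp hc)
    fun h => hc' (ExtVanish.right hf hfg hg h hp)

end Main

/-- Proposition 4.2(3): for `0 < q < s ≤ n`, `0 < r ≤ m`, `S/(I_q J_r + I_s)` is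
Cohen–Macaulay if and only if `s = q + 1` and `r = m`, in which case
`dim S/(I_q J_m + I_{q+1}) = m + q - 1`. -/
theorem cm_IqJr_Is (K : Type) [Field K] (n m q r s : ℕ)
    (h0q : 0 < q) (hqs : q < s) (hsn : s ≤ n) (h0r : 0 < r) (hrm : r ≤ m) :
    (IsCohenMacaulay (MvPolynomial (Fin (n + m)) K ⧸ (Iq K n m q * Jr K n m r + Iq K n m s))
        (irrelevantMax K (n + m) (Iq K n m q * Jr K n m r + Iq K n m s)) ↔ s = q + 1 ∧ r = m) ∧
      ringKrullDim (MvPolynomial (Fin (n + m)) K ⧸ (Iq K n m q * Jr K n m m + Iq K n m (q + 1))) =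
        ((m + q - 1 : ℕ) : WithBot ℕ∞) := by
  -- A face has one vertex less than the generators it avoids, whence the shift by one.
  obtain ⟨q, rfl⟩ := Nat.exists_eq_add_of_lt h0q
  obtain ⟨s, rfl⟩ := Nat.exists_eq_add_of_lt (h0q.trans hqs)
  obtain ⟨r, rfl⟩ := Nat.exists_eq_add_of_lt h0r
  obtain ⟨m, rfl⟩ := Nat.exists_eq_add_of_lt (h0r.trans_le hrm)
  simp only [zero_add] at *
  constructor
  · rw [ideal_eq_srIdeal (by omega), IsCohenMacaulay,
      ringDepth_bigComplex (by omega) (by omega) (by omega),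
      ringKrullDim_bigComplex (by omega) (by omega) (by omega)]
    norm_cast
    omega
  · rw [ideal_eq_srIdeal (by omega), ringKrullDim_bigComplex (by omega) (by omega) (by omega)]
    norm_cast
    omega
end

section
/- Let K be a field, S = K[x_1,...,x_n,y_1,...,y_m], and let 0 < q < s ≤ n and 0 < t < r ≤ m. Then the quotient ring S/(I_q J_r + I_s J_t) is Cohen-Macaulay if and only if q = n-1, r = m, s = n and t = m-1, and in that case dim S/(I_{n-1} J_m + I_n J_{m-1}) = m + n - 2. -/
/-! Put `L = I_q J_r + I_s J_t` and let `d` be the length of a regular sequence in the irrelevant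
ideal of `S/L`.

Two bounds on `d` rule out the Cohen–Macaulay property. If `A B ⊆ L` and `B` is nonzero in the
localization of `S/L`, then `A` has no nonzerodivisor there, whence `d ≤ dim S/A`
(`length_le_of_mul_le`). If both `A` and `B` are nonzero there, then Hartshorne's connectedness
argument gives `d ≤ dim S/(A + B) + 1` (`length_le_of_mul_le'`). Take `A = I_q` and `B = J_r`.
* If `r < m`, the second bound gives `d ≤ q + r - 1`, while `L` vanishes on a coordinate subspace
  of dimension `q - 1 + m`.
* If `r = m`, `s = n` and `q < n - 1`, the first bound gives `d ≤ q - 1 + m`, while `L` vanishes on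
  a coordinate subspace of dimension `n + m - 2`.

The cases `s < n` and `t < m - 1` follow by exchanging the two sets of variables.

For the exceptional parameters, `L` is generated by the products of all but one of the `N = n + m`
variables. A prime containing `L` contains two variables, so the dimension is `N - 2`. With `w, z`
the last two variables, the elements `x_k - (w + z ^ (k + 1))`, `k < N - 2`, form a regular sequence
(`exists_isRegularSeq`). Indeed, dividing out the first `i` of them replaces `L` by the ideal
generated by the products of all but one of `N` pairwise non-associated primes, and modulo such an
ideal the next element is a nonzerodivisor (`mem_span_prod_of_mul_mem`). -/

open MvPolynomial

/-! ### Depth of local rings with zero divisors -/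

section LocalAlgebra

open scoped Pointwise

/-- If a prime `p` annihilates a nonzero element of `M`, then `dim T/p` is at least the length of
any `M`-regular sequence. For the first element `x` of the sequence, `p` also annihilates a nonzero
element of `M/xM` by Nakayama, so some associated prime of `M/xM` contains `p`; it contains `x`,
which `p` does not, and the induction continues from there. -/
theorem exists_ltSeries_of_isRegular {T : Type} [CommRing T] [IsNoetherianRing T] [IsLocalRing T]
    (rs : List T) : ∀ (M : Type) [AddCommGroup M] [Module T M] [Module.Finite T M],
      RingTheory.Sequence.IsRegular M rs → ∀ (p : PrimeSpectrum T) (m : M), m ≠ 0 →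
      (∀ a ∈ p.asIdeal, a • m = 0) →
      ∃ s : LTSeries (PrimeSpectrum T), s.length = rs.length ∧ s.head = p := by
  induction rs with
  | nil =>
    intro M _ _ _ _ p m _ _
    exact ⟨RelSeries.singleton _ p, rfl, rfl⟩
  | cons x rs ih =>
    intro M _ _ _ hreg p m hm hpm
    have hxm : x ∈ IsLocalRing.maximalIdeal T := by
      simpa using fun isu ↦ hreg.2 (by simp [Ideal.span_singleton_eq_top.mpr isu])
    obtain ⟨hx, hrs⟩ := (RingTheory.Sequence.isRegular_cons_iff M x rs).mp hreg
    -- the submodule of elements killed by `p`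
    let N : Submodule T M :=
      { carrier := {y | ∀ a ∈ p.asIdeal, a • y = 0}
        add_mem' := fun {y z} hy hz a ha => by rw [smul_add, hy a ha, hz a ha, add_zero]
        zero_mem' := fun a _ => smul_zero a
        smul_mem' := fun c y hy a ha => by rw [smul_comm, hy a ha, smul_zero] }
    have hN : ¬ N ≤ x • (⊤ : Submodule T M) := by
      intro hle
      have hsub : N ≤ Ideal.span {x} • N := by
        intro y hy
        obtain ⟨z, -, rfl⟩ := hle hy
        have hz : z ∈ N := by
          intro a ha
          apply hx
          have := hy a ha
          simp only [DistribSMul.toLinearMap_apply] at this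
          simpa [smul_comm a x z] using this
        exact Submodule.smul_mem_smul (Ideal.mem_span_singleton_self x) hz
      have hbot : N = ⊥ := Submodule.eq_bot_of_le_smul_of_le_jacobson_bot _ N
        (IsNoetherian.noetherian N) hsub (by
          rw [Ideal.span_singleton_le_iff_mem]
          exact IsLocalRing.maximalIdeal_le_jacobson _ hxm)
      have : m ∈ N := hpm
      rw [hbot] at this
      exact hm (by simpa using this)
    obtain ⟨y, hyN, hyx⟩ := SetLike.not_le_iff_exists.mp hN
    have hy0 : (Submodule.Quotient.mk y : QuotSMulTop x M) ≠ 0 := by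
      intro h
      exact hyx ((Submodule.Quotient.mk_eq_zero _).mp h)
    obtain ⟨P, hP, hle⟩ := exists_le_isAssociatedPrime_of_isNoetherianRing T _ hy0
    obtain ⟨hPp, w, hw⟩ := Submodule.isAssociatedPrime_iff.mp hP
    have hmemP : ∀ a, a ∈ P ↔ a • w = 0 := by
      intro a
      rw [hw, Submodule.mem_colon_singleton, Submodule.mem_bot]
    have hw0 : w ≠ 0 := by
      rintro rfl
      exact hPp.ne_top (by ext a; simp [hmemP])
    obtain ⟨s, hs, hs'⟩ := ih (QuotSMulTop x M) hrs ⟨P, hPp⟩ w hw0 (fun a ha => (hmemP a).mp ha)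
    have hlt : p < s.head := by
      rw [hs']
      refine lt_of_le_of_ne ?_ ?_
      · intro a ha
        apply hle
        rw [Submodule.mem_colon_singleton, Submodule.mem_bot, ← Submodule.Quotient.mk_smul,
          hyN a ha, Submodule.Quotient.mk_zero]
      · intro h
        have hxp : x ∈ p.asIdeal := by
          rw [h]
          apply hle
          rw [Submodule.mem_colon_singleton, Submodule.mem_bot, ← Submodule.Quotient.mk_smul,
            Submodule.Quotient.mk_eq_zero]
          exact Submodule.smul_mem_pointwise_smul _ _ _ trivial
        exact hm (hx (by simpa using hpm x hxp))
    exact ⟨s.cons p hlt, by simp [hs], by simp⟩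

/-- Either `I` contains a nonzerodivisor on `M`, or it lies in an associated prime of `M`, from
which a chain of primes as long as the given regular sequence starts. -/
theorem exists_ltSeries_or_exists_isSMulRegular {T : Type} [CommRing T] [IsNoetherianRing T]
    [IsLocalRing T] (M : Type) [AddCommGroup M] [Module T M] [Module.Finite T M]
    (rs : List T) (hrs : RingTheory.Sequence.IsRegular M rs) (I : Ideal T) :
    (∃ s : LTSeries (PrimeSpectrum T), s.length = rs.length ∧ I ≤ s.head.asIdeal) ∨
      ∃ a ∈ I, IsSMulRegular M a := by
  by_cases h : Subsingleton ((T ⧸ I) →ₗ[T] M)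
  · right
    obtain ⟨r, hr, hreg⟩ := IsSMulRegular.subsingleton_linearMap_iff.mp h
    exact ⟨r, by rwa [Ideal.annihilator_quotient] at hr, hreg⟩
  · left
    rw [not_subsingleton_iff_nontrivial] at h
    obtain ⟨f, hf⟩ := exists_ne (0 : (T ⧸ I) →ₗ[T] M)
    have hm : f 1 ≠ 0 := by
      intro h1
      apply hf
      ext
      simpa using h1
    obtain ⟨P, hP, hle⟩ := exists_le_isAssociatedPrime_of_isNoetherianRing T _ hm
    obtain ⟨hPp, w, hw⟩ := Submodule.isAssociatedPrime_iff.mp hP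
    have hmemP : ∀ a, a ∈ P ↔ a • w = 0 := by
      intro a
      rw [hw, Submodule.mem_colon_singleton, Submodule.mem_bot]
    have hw0 : w ≠ 0 := by
      rintro rfl
      exact hPp.ne_top (by ext a; simp [hmemP])
    obtain ⟨s, hs, hs'⟩ := exists_ltSeries_of_isRegular rs M hrs ⟨P, hPp⟩ w hw0
      (fun a ha => (hmemP a).mp ha)
    refine ⟨s, hs, ?_⟩
    rw [hs']
    intro a ha
    apply hle
    rw [Submodule.mem_colon_singleton, Submodule.mem_bot, ← map_smul]
    have : a • (1 : T ⧸ I) = 0 := by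
      rw [Algebra.smul_def, mul_one]
      exact Ideal.Quotient.eq_zero_iff_mem.mpr ha
    rw [this, map_zero]

/-- Passing from `T` to `T/aT`, for a nonzerodivisor `a`, lowers the depth by at most one: by
Rees' theorem depth is read off from the vanishing of `Ext` out of the residue field, and `Ext`
has a long exact sequence. -/
theorem exists_isRegular_quotSMulTop {T : Type} [CommRing T] [IsNoetherianRing T]
    [IsLocalRing T] (rs : List T) (hrs : RingTheory.Sequence.IsRegular T rs)
    (hmem : ∀ r ∈ rs, r ∈ IsLocalRing.maximalIdeal T)
    (a : T) (ham : a ∈ IsLocalRing.maximalIdeal T) (ha : IsSMulRegular T a) (d : ℕ)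
    (hd : d + 1 ≤ rs.length) :
    ∃ rs' : List T, rs'.length = d ∧ RingTheory.Sequence.IsRegular (QuotSMulTop a T) rs' := by
  have hlt : ∀ (M : ModuleCat.{0} T) [Module.Finite T M] [Nontrivial M],
      IsLocalRing.maximalIdeal T • (⊤ : Submodule T M) < ⊤ := by
    intro M _ _
    exact (Submodule.top_ne_ideal_smul_of_le_jacobson_annihilator
          (IsLocalRing.maximalIdeal_le_jacobson _)).symm.lt_top
  have hext := ((ModuleCat.exists_isRegular_tfae (IsLocalRing.maximalIdeal T) rs.length
    (ModuleCat.of T T) (hlt _)).out 1 3 rfl rfl).mpr ⟨rs, rfl, hmem, hrs⟩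
  have : Nontrivial (QuotSMulTop a T) := nontrivial_quotSMulTop_of_mem_maximalIdeal T ham
  obtain ⟨rs', h1, -, h3⟩ := ((ModuleCat.exists_isRegular_tfae (IsLocalRing.maximalIdeal T) d
    (ModuleCat.of T (QuotSMulTop a T)) (hlt _)).out 1 3 rfl rfl).mp (by
      intro i hi
      have zero1 := AddCommGrpCat.isZero_of_iff_subsingleton.mpr (hext i (by omega))
      have zero2 := AddCommGrpCat.isZero_of_iff_subsingleton.mpr (hext (i + 1) (by omega))
      exact AddCommGrpCat.subsingleton_of_isZero <|
        CategoryTheory.ShortComplex.Exact.isZero_of_both_zeros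
        ((CategoryTheory.Abelian.Ext.covariant_sequence_exact₃' _
          (IsSMulRegular.smulShortComplex_shortExact (M := ModuleCat.of T T) ha)) i (i + 1) rfl)
        (zero1.eq_zero_of_src _) (zero2.eq_zero_of_tgt _))
  exact ⟨rs', h1, h3⟩

/-- A form of Hartshorne's connectedness theorem: if `A B = 0` with `A, B ≠ 0`, then the depth is
at most `dim T/(A + B) + 1`. Otherwise `A + B` would contain a regular sequence `a, b` of length
two. Writing `a = a₁ + a₂` with `a₁ ∈ A` and `a₂ ∈ B`, the products of elements of `A` with
elements of `B` vanish, so `a₁ = c a` is forced, with `a₁ (1 - c) = 0 = a₂ c`. As `c` or `1 - c` is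
a unit, `a` lies in `A` or in `B` and kills the other ideal. -/
theorem exists_ltSeries_of_mul_eq_bot {T : Type} [CommRing T] [IsNoetherianRing T]
    [IsLocalRing T] (rs : List T) (hrs : RingTheory.Sequence.IsRegular T rs)
    (A B : Ideal T) (hAB : A * B = ⊥) (hA : A ≠ ⊥) (hB : B ≠ ⊥) :
    ∃ s : LTSeries (PrimeSpectrum T), rs.length ≤ s.length + 1 ∧ A ⊔ B ≤ s.head.asIdeal := by
  have hmul : ∀ a ∈ A, ∀ b ∈ B, a * b = 0 := fun a ha b hb => by
    have := Ideal.mul_mem_mul ha hb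
    rwa [hAB] at this
  have hle : A ⊔ B ≤ IsLocalRing.maximalIdeal T := by
    refine sup_le (IsLocalRing.le_maximalIdeal ?_) (IsLocalRing.le_maximalIdeal ?_)
    · rintro rfl
      exact hB (by simpa using hAB)
    · rintro rfl
      exact hA (by simpa using hAB)
  have hmem : ∀ r ∈ rs, r ∈ IsLocalRing.maximalIdeal T := by
    intro r hr hu
    refine hrs.2 ?_
    have : Ideal.ofList rs = ⊤ := Ideal.eq_top_of_isUnit_mem _ (Ideal.subset_span hr)
      (by simpa using hu)
    simp [this]
  rcases exists_ltSeries_or_exists_isSMulRegular T rs hrs (A ⊔ B) with ⟨s, hs, hs'⟩ | ⟨a, ha, har⟩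
  · exact ⟨s, by omega, hs'⟩
  rcases Nat.eq_zero_or_pos rs.length with h0 | hpos
  · exact ⟨RelSeries.singleton _ ⟨IsLocalRing.maximalIdeal T, inferInstance⟩, by omega, hle⟩
  obtain ⟨rs', h1, h2⟩ := exists_isRegular_quotSMulTop rs hrs hmem a (hle ha) har (rs.length - 1)
    (by omega)
  rcases exists_ltSeries_or_exists_isSMulRegular _ rs' h2 (A ⊔ B) with
    ⟨s, hs, hs'⟩ | ⟨b, hb, hbr⟩
  · exact ⟨s, by omega, hs'⟩
  exfalso
  -- from here on `a, b` is a regular sequence of length two in `A ⊔ B`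
  have hbr' : ∀ y : T, b * y ∈ Ideal.span {a} → y ∈ Ideal.span {a} := by
    intro y hy
    have hspan : (a • (⊤ : Submodule T T)) = Ideal.span {a} := by
      simp [← Submodule.ideal_span_singleton_smul]
    have := (isSMulRegular_quotient_iff_mem_of_smul_mem (a • (⊤ : Submodule T T)) b).mp hbr y
    rw [hspan] at this
    exact this hy
  have hreg : ∀ y, a * y = 0 → y = 0 := fun y hy => har (by simpa using hy)
  obtain ⟨a1, ha1, a2, ha2, rfl⟩ := Submodule.mem_sup.mp ha
  obtain ⟨b1, hb1, b2, hb2, rfl⟩ := Submodule.mem_sup.mp hb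
  obtain ⟨c, hc⟩ := Ideal.mem_span_singleton'.mp (hbr' a1 (Ideal.mem_span_singleton'.mpr ⟨b1, by
    linear_combination hmul b1 hb1 a2 ha2 - hmul a1 ha1 b2 hb2⟩))
  have hz : a2 * c = 0 := by
    apply hreg
    have e : a2 * c = a1 * (1 - c) := by linear_combination hc
    have e1 := hmul _ ha1 _ (B.mul_mem_right c ha2)
    have e2 := hmul _ (A.mul_mem_right (1 - c) ha1) _ ha2
    linear_combination e1 + e2 + a2 * e
  have hz' : a1 * (1 - c) = 0 := by linear_combination hz - hc
  have hcase : a1 = 0 ∨ a2 = 0 := by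
    rcases IsLocalRing.isUnit_or_isUnit_one_sub_self c with h | h
    · exact Or.inr (h.mul_left_eq_zero.mp hz)
    · exact Or.inl (h.mul_left_eq_zero.mp hz')
  rcases hcase with rfl | rfl
  · apply hA
    rw [eq_bot_iff]
    intro y hy
    exact hreg y (by linear_combination hmul y hy a2 ha2)
  · apply hB
    rw [eq_bot_iff]
    intro y hy
    exact hreg y (by linear_combination hmul a1 ha1 y hy)

theorem isWeaklyRegular_of_isRegularSeq {R : Type} [CommRing R] {l : List R}
    (h : IsRegularSeq R l) : RingTheory.Sequence.IsWeaklyRegular R l := by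
  refine ⟨fun i hi => ?_⟩
  rw [isSMulRegular_quotient_iff_mem_of_smul_mem]
  intro y hy
  have e : (Ideal.ofList (l.take i) • ⊤ : Submodule R R) = Ideal.span {x | x ∈ l.take i} := by
    rw [Ideal.smul_eq_mul, Ideal.mul_top]
  rw [e] at hy ⊢
  exact h.1 i hi y (by simpa using hy)

theorem length_le_ringKrullDim_of_le_head {R : Type} [CommRing R] (I : Ideal R)
    (s : LTSeries (PrimeSpectrum R)) (hs : I ≤ s.head.asIdeal) :
    (s.length : WithBot ℕ∞) ≤ ringKrullDim (R ⧸ I) := by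
  rw [ringKrullDim_quotient]
  let s' : LTSeries (PrimeSpectrum.zeroLocus (R := R) I) :=
    { length := s.length
      toFun := fun i => ⟨s i, fun a ha => (s.head_le i) (hs ha)⟩
      step := fun i => s.step i }
  exact le_iSup (fun t : LTSeries (PrimeSpectrum.zeroLocus (R := R) I) =>
    (t.length : WithBot ℕ∞)) s'

/-- A chain of primes in a localization, above the extension of `I`, bounds `dim R/I`. -/
theorem length_le_ringKrullDim_quotient {R T : Type} [CommRing R] [CommRing T] [Algebra R T]
    (p : Ideal R) [p.IsPrime] [IsLocalization.AtPrime T p] (I : Ideal R)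
    (s : LTSeries (PrimeSpectrum T)) (hs : I.map (algebraMap R T) ≤ s.head.asIdeal) :
    (s.length : WithBot ℕ∞) ≤ ringKrullDim (R ⧸ I) := by
  have hmono : StrictMono (PrimeSpectrum.comap (algebraMap R T)) := by
    refine Monotone.strictMono_of_injective (fun a b h => Ideal.comap_mono h) ?_
    exact PrimeSpectrum.localization_comap_injective T p.primeCompl
  exact length_le_ringKrullDim_of_le_head I (s.map _ hmono) (by
    rw [LTSeries.head_map]
    exact Ideal.map_le_iff_le_comap.mp hs)

/-- If `A B = 0` and `B` does not vanish in the localization at a prime containing the regular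
sequence, then the length of the sequence is at most `dim R/A`: `A` contains no nonzerodivisor of
the localization. -/
theorem length_le_of_mul_eq_bot {R : Type} [CommRing R] [IsNoetherianRing R]
    (p : Ideal R) [p.IsPrime] (l : List R) (hl : IsRegularSeq R l) (hlp : ∀ x ∈ l, x ∈ p)
    (A B : Ideal R) (hAB : A * B = ⊥)
    (hB : B.map (algebraMap R (Localization.AtPrime p)) ≠ ⊥) :
    (l.length : WithBot ℕ∞) ≤ ringKrullDim (R ⧸ A) := by
  have hreg := (isWeaklyRegular_of_isRegularSeq hl).isRegular_of_isLocalization_of_mem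
    (Localization.AtPrime p) p hlp
  obtain ⟨b, hb, hb0⟩ := Submodule.exists_mem_ne_zero_of_ne_bot hB
  rcases exists_ltSeries_or_exists_isSMulRegular _ _ hreg (A.map (algebraMap R _)) with
    ⟨s, hs, hs'⟩ | ⟨a, ha, har⟩
  · rw [List.length_map] at hs
    rw [← hs]
    exact length_le_ringKrullDim_quotient p A s hs'
  · exfalso
    have := Ideal.mul_mem_mul ha hb
    rw [← Ideal.map_mul, hAB, Ideal.map_bot, Ideal.mem_bot] at this
    exact hb0 (har (by simpa using this))

/-- The connectedness bound for a ring that need not be local. -/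
theorem length_le_of_mul_eq_bot' {R : Type} [CommRing R] [IsNoetherianRing R]
    (p : Ideal R) [p.IsPrime] (l : List R) (hl : IsRegularSeq R l) (hlp : ∀ x ∈ l, x ∈ p)
    (A B : Ideal R) (hAB : A * B = ⊥)
    (hA : A.map (algebraMap R (Localization.AtPrime p)) ≠ ⊥)
    (hB : B.map (algebraMap R (Localization.AtPrime p)) ≠ ⊥) :
    (l.length : WithBot ℕ∞) ≤ ringKrullDim (R ⧸ (A ⊔ B)) + 1 := by
  have hreg := (isWeaklyRegular_of_isRegularSeq hl).isRegular_of_isLocalization_of_mem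
    (Localization.AtPrime p) p hlp
  obtain ⟨s, hs, hs'⟩ := exists_ltSeries_of_mul_eq_bot _ hreg _ _
    (by rw [← Ideal.map_mul, hAB, Ideal.map_bot]) hA hB
  rw [List.length_map] at hs
  rw [← Ideal.map_sup] at hs'
  have := length_le_ringKrullDim_quotient p (A ⊔ B) s hs'
  calc (l.length : WithBot ℕ∞) ≤ ((s.length + 1 : ℕ) : WithBot ℕ∞) := by exact_mod_cast hs
    _ = (s.length : WithBot ℕ∞) + 1 := by push_cast; rfl
    _ ≤ _ := by gcongr

end LocalAlgebra

/-! ### Krull dimension of quotients by products of variables -/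

section SquarefreeIdeals

set_option linter.unusedSectionVars false

variable {σ : Type} [Fintype σ] [DecidableEq σ] (K : Type) [Field K]

/-- The ideal generated by the square-free monomials of degree `q` in the variables indexed by
`W`. -/
noncomputable def sqfreeIdeal (W : Finset σ) (q : ℕ) : Ideal (MvPolynomial σ K) :=
  Ideal.span {f | ∃ s : Finset σ, s ⊆ W ∧ s.card = q ∧ f = ∏ i ∈ s, X i}

/-- The substitution setting the variables indexed by `U` to zero. -/
noncomputable def killVars (U : Finset σ) :
    MvPolynomial σ K →ₐ[K] MvPolynomial {i // i ∉ U} K :=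
  aeval fun i => if h : i ∈ U then 0 else X ⟨i, h⟩

theorem killVars_prod_eq_zero_iff (U s : Finset σ) :
    killVars K U (∏ i ∈ s, X i) = 0 ↔ ∃ i ∈ s, i ∈ U := by
  simp only [killVars, map_prod, aeval_X, Finset.prod_eq_zero_iff]
  refine exists_congr fun i => and_congr_right fun _ => ?_
  split_ifs with h <;> simp [h]

theorem killVars_surjective (U : Finset σ) : Function.Surjective (killVars K U) := by
  intro g
  refine ⟨rename Subtype.val g, ?_⟩
  rw [killVars, aeval_rename]
  have : ((fun i => if h : i ∈ U then 0 else X ⟨i, h⟩ : σ → MvPolynomial {i // i ∉ U} K) ∘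
      Subtype.val) = X := by
    ext1 i
    simp [i.2]
  rw [this, aeval_X_left, AlgHom.id_apply]

theorem constantCoeff_killVars (U : Finset σ) (f : MvPolynomial σ K) :
    constantCoeff (killVars K U f) = constantCoeff f := by
  have : (constantCoeff.comp (killVars K U).toRingHom) = constantCoeff := by
    ext i
    · simp
    · by_cases h : i ∈ U <;> simp [killVars, h]
  exact RingHom.congr_fun this f

theorem sqfreeIdeal_le_ker (U W : Finset σ) (q : ℕ) (h : (W \ U).card < q) :
    sqfreeIdeal K W q ≤ RingHom.ker (killVars K U) := by
  rw [sqfreeIdeal, Ideal.span_le]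
  rintro _ ⟨s, hs, rfl, rfl⟩
  rw [SetLike.mem_coe, RingHom.mem_ker, killVars_prod_eq_zero_iff]
  by_contra! hc
  refine absurd (Finset.card_le_card (s := s) (t := W \ U) ?_) (by omega)
  intro i hi
  exact Finset.mem_sdiff.mpr ⟨hs hi, hc i hi⟩

open Classical in
theorem card_filter_notMem_lt_of_sqfreeIdeal_le (W : Finset σ) (q : ℕ)
    (P : Ideal (MvPolynomial σ K)) [P.IsPrime] (h : sqfreeIdeal K W q ≤ P) :
    (W.filter fun i => (X i : MvPolynomial σ K) ∉ P).card < q := by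
  by_contra! hc
  obtain ⟨s, hs, hsc⟩ := Finset.exists_subset_card_eq hc
  have hmem : (∏ i ∈ s, X i : MvPolynomial σ K) ∈ P :=
    h (Ideal.subset_span ⟨s, fun i hi => (Finset.mem_filter.mp (hs hi)).1, hsc, rfl⟩)
  obtain ⟨i, hi, hiP⟩ := (Ideal.IsPrime.prod_mem_iff (p := P)).mp hmem
  exact (Finset.mem_filter.mp (hs hi)).2 hiP

theorem ringKrullDim_mvPolynomial_compl (U : Finset σ) :
    ringKrullDim (MvPolynomial {i // i ∉ U} K) = (Uᶜ.card : WithBot ℕ∞) := by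
  rw [MvPolynomial.ringKrullDim_of_isNoetherianRing, ringKrullDim_eq_zero_of_field, zero_add,
    Nat.card_eq_fintype_card, Fintype.card_subtype_compl, Finset.card_compl, Fintype.card_coe]

/-- A coordinate subspace on which `L` vanishes bounds the dimension of `S/L` from below. -/
theorem card_compl_le_ringKrullDim (U : Finset σ) (L : Ideal (MvPolynomial σ K))
    (hL : L ≤ RingHom.ker (killVars K U)) :
    (Uᶜ.card : WithBot ℕ∞) ≤ ringKrullDim (MvPolynomial σ K ⧸ L) := by
  rw [← ringKrullDim_mvPolynomial_compl K U]
  exact ringKrullDim_le_of_surjective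
    (Ideal.Quotient.lift L (killVars K U).toRingHom fun a ha => RingHom.mem_ker.mp (hL ha))
    (Ideal.Quotient.lift_surjective_of_surjective L _ (killVars_surjective K U))

theorem ringKrullDim_quotient_span_X_le (U : Finset σ) :
    ringKrullDim (MvPolynomial σ K ⧸ Ideal.span ((X : σ → MvPolynomial σ K) '' U)) ≤
      (Uᶜ.card : WithBot ℕ∞) := by
  rw [← ringKrullDim_mvPolynomial_compl K U]
  set V := Ideal.span ((X : σ → MvPolynomial σ K) '' U)
  refine ringKrullDim_le_of_surjective
    (((Ideal.Quotient.mkₐ K V).comp (rename Subtype.val)).toRingHom :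
      MvPolynomial {i // i ∉ U} K →+* _) ?_
  have : (Ideal.Quotient.mkₐ K V).comp ((rename Subtype.val).comp (killVars K U)) =
      Ideal.Quotient.mkₐ K V := by
    ext i
    by_cases h : i ∈ U
    · have : (Ideal.Quotient.mk V) (X i) = 0 :=
        Ideal.Quotient.eq_zero_iff_mem.mpr (Ideal.subset_span ⟨i, h, rfl⟩)
      simp [killVars, h, this]
    · simp [killVars, h]
  intro y
  obtain ⟨f, rfl⟩ := Ideal.Quotient.mk_surjective y
  exact ⟨killVars K U f, AlgHom.congr_fun this f⟩

open Classical in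
/-- If every prime over `I` omits at most `c` variables, then `dim S/I ≤ c`: a chain of primes
starting at `P` lives in the quotient of `S` by the variables in `P`. -/
theorem ringKrullDim_quotient_le_of_forall_prime (I : Ideal (MvPolynomial σ K)) (c : ℕ)
    (h : ∀ P : Ideal (MvPolynomial σ K), P.IsPrime → I ≤ P →
      (Finset.univ.filter fun i => (X i : MvPolynomial σ K) ∉ P).card ≤ c) :
    ringKrullDim (MvPolynomial σ K ⧸ I) ≤ (c : WithBot ℕ∞) := by
  rw [ringKrullDim_quotient]
  refine iSup_le fun s => ?_
  let s' : LTSeries (PrimeSpectrum (MvPolynomial σ K)) := s.map Subtype.val fun _ _ h => h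
  have hI : I ≤ s.head.1.asIdeal := s.head.2
  let U : Finset σ := Finset.univ.filter fun i => (X i : MvPolynomial σ K) ∈ s.head.1.asIdeal
  have h1 := length_le_ringKrullDim_of_le_head
    (Ideal.span ((X : σ → MvPolynomial σ K) '' U)) s' (by
      rw [Ideal.span_le]
      rintro _ ⟨i, hi, rfl⟩
      exact (Finset.mem_filter.mp hi).2)
  have h2 := h _ s.head.1.isPrime hI
  have h3 : Uᶜ = Finset.univ.filter fun i => (X i : MvPolynomial σ K) ∉ s.head.1.asIdeal := by
    ext i; simp [U]
  refine (h1.trans (ringKrullDim_quotient_span_X_le K U)).trans ?_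
  rw [h3]
  exact_mod_cast h2

variable {K}

/-- Nonvanishing of an ideal in the localization of `S/L` at the irrelevant ideal. Its denominators
have nonzero constant term, hence stay nonzero in the domain obtained by killing the variables
in `U`. -/
theorem map_map_ne_bot (L : Ideal (MvPolynomial σ K)) (p : Ideal (MvPolynomial σ K ⧸ L))
    [p.IsPrime] (hp : ∀ f, Ideal.Quotient.mk L f ∉ p → constantCoeff f ≠ 0)
    (A : Ideal (MvPolynomial σ K)) (U : Finset σ) (hL : L ≤ RingHom.ker (killVars K U))
    (f : MvPolynomial σ K) (hf : f ∈ A) (hfU : killVars K U f ≠ 0) :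
    (A.map (Ideal.Quotient.mk L)).map
      (algebraMap (MvPolynomial σ K ⧸ L) (Localization.AtPrime p)) ≠ ⊥ := by
  intro h
  have hmem := Ideal.mem_map_of_mem (algebraMap (MvPolynomial σ K ⧸ L) (Localization.AtPrime p))
    (Ideal.mem_map_of_mem (Ideal.Quotient.mk L) hf)
  rw [h, Ideal.mem_bot, IsLocalization.map_eq_zero_iff p.primeCompl] at hmem
  obtain ⟨⟨u, hu⟩, huf⟩ := hmem
  obtain ⟨v, rfl⟩ := Ideal.Quotient.mk_surjective u
  have hvf : v * f ∈ L := by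
    rw [← Ideal.Quotient.eq_zero_iff_mem, map_mul]
    exact huf
  have h0 := hL hvf
  rw [RingHom.mem_ker, map_mul] at h0
  have hv : killVars K U v = 0 := (mul_eq_zero.mp h0).resolve_right hfU
  apply hp v hu
  rw [← constantCoeff_killVars K U, hv, map_zero]

theorem ringKrullDim_quotient_map_le (L A : Ideal (MvPolynomial σ K)) :
    ringKrullDim ((MvPolynomial σ K ⧸ L) ⧸ A.map (Ideal.Quotient.mk L)) ≤
      ringKrullDim (MvPolynomial σ K ⧸ A) := by
  refine ringKrullDim_le_of_surjective (Ideal.quotientMap _ (Ideal.Quotient.mk L)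
    Ideal.le_comap_map) ?_
  exact Ideal.quotientMap_surjective Ideal.Quotient.mk_surjective

/-- A prime of `S/L` containing all variables, whose complement consists of classes of
polynomials with nonzero constant term. -/
theorem exists_prime_irrelevant (L : Ideal (MvPolynomial σ K))
    (hL : L ≤ RingHom.ker (constantCoeff : MvPolynomial σ K →+* K)) :
    ∃ p : Ideal (MvPolynomial σ K ⧸ L), p.IsPrime ∧
      (∀ f, Ideal.Quotient.mk L f ∉ p → constantCoeff f ≠ 0) ∧
      Ideal.map (Ideal.Quotient.mk L) (Ideal.span (Set.range X)) ≤ p := by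
  refine ⟨RingHom.ker (Ideal.Quotient.lift L constantCoeff fun a ha => hL ha),
    RingHom.ker_isPrime _, ?_, ?_⟩
  · intro f hf h
    exact hf ((Ideal.Quotient.lift_mk L constantCoeff fun a ha => hL ha).trans h)
  · rw [Ideal.map_le_iff_le_comap, Ideal.span_le]
    rintro _ ⟨i, rfl⟩
    exact (Ideal.Quotient.lift_mk L constantCoeff fun a ha => hL ha).trans (constantCoeff_X _ _)

theorem le_ker_constantCoeff (L : Ideal (MvPolynomial σ K)) (U : Finset σ)
    (hL : L ≤ RingHom.ker (killVars K U)) :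
    L ≤ RingHom.ker (constantCoeff : MvPolynomial σ K →+* K) := by
  intro a ha
  have := hL ha
  rw [RingHom.mem_ker] at this ⊢
  rw [← constantCoeff_killVars K U, this, map_zero]

/-- Regular sequences in the irrelevant ideal of `S/L` have length at most `dim S/A` if
`A B ≤ L`. The element `f` and the set `U` witness that `B` does not vanish locally. -/
theorem length_le_of_mul_le (L A B : Ideal (MvPolynomial σ K)) (hAB : A * B ≤ L)
    (l : List (MvPolynomial σ K ⧸ L)) (hl : IsRegularSeq _ l)
    (hlm : ∀ x ∈ l, x ∈ Ideal.map (Ideal.Quotient.mk L) (Ideal.span (Set.range X)))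
    (U : Finset σ) (hL : L ≤ RingHom.ker (killVars K U))
    (f : MvPolynomial σ K) (hf : f ∈ B) (hfU : killVars K U f ≠ 0) :
    (l.length : WithBot ℕ∞) ≤ ringKrullDim (MvPolynomial σ K ⧸ A) := by
  obtain ⟨p, hp, hpc, hpl⟩ := exists_prime_irrelevant L (le_ker_constantCoeff L U hL)
  refine (length_le_of_mul_eq_bot p l hl (fun x hx => hpl (hlm x hx))
    (A.map (Ideal.Quotient.mk L)) (B.map (Ideal.Quotient.mk L)) ?_
    (map_map_ne_bot L p hpc B U hL f hf hfU)).trans (ringKrullDim_quotient_map_le L A)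
  rw [← Ideal.map_mul, Ideal.map_eq_bot_iff_le_ker, Ideal.mk_ker]
  exact hAB

/-- Regular sequences in the irrelevant ideal of `S/L` have length at most `dim S/(A + B) + 1` if
`A B ≤ L`, for ideals `A` and `B` that do not vanish locally. -/
theorem length_le_of_mul_le' (L A B : Ideal (MvPolynomial σ K)) (hAB : A * B ≤ L)
    (l : List (MvPolynomial σ K ⧸ L)) (hl : IsRegularSeq _ l)
    (hlm : ∀ x ∈ l, x ∈ Ideal.map (Ideal.Quotient.mk L) (Ideal.span (Set.range X)))
    (U : Finset σ) (hL : L ≤ RingHom.ker (killVars K U))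
    (f : MvPolynomial σ K) (hf : f ∈ A) (hfU : killVars K U f ≠ 0)
    (V : Finset σ) (hL' : L ≤ RingHom.ker (killVars K V))
    (g : MvPolynomial σ K) (hg : g ∈ B) (hgV : killVars K V g ≠ 0) :
    (l.length : WithBot ℕ∞) ≤ ringKrullDim (MvPolynomial σ K ⧸ (A ⊔ B)) + 1 := by
  obtain ⟨p, hp, hpc, hpl⟩ := exists_prime_irrelevant L (le_ker_constantCoeff L U hL)
  refine (length_le_of_mul_eq_bot' p l hl (fun x hx => hpl (hlm x hx))
    (A.map (Ideal.Quotient.mk L)) (B.map (Ideal.Quotient.mk L)) ?_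
    (map_map_ne_bot L p hpc A U hL f hf hfU) (map_map_ne_bot L p hpc B V hL' g hg hgV)).trans ?_
  · rw [← Ideal.map_mul, Ideal.map_eq_bot_iff_le_ker, Ideal.mk_ker]
    exact hAB
  · rw [← Ideal.map_sup]
    gcongr
    exact ringKrullDim_quotient_map_le L (A ⊔ B)

end SquarefreeIdeals

/-! ### Parameters for which the depth is too small -/

section MixedIdeal

set_option linter.unusedSectionVars false

variable {σ : Type} [Fintype σ] [DecidableEq σ] (K : Type) [Field K]

/-- The ideal `I_q J_r + I_s J_t`, where `I` and `J` refer to the variables indexed by `A` and by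
`B` respectively. -/
noncomputable def mixedIdeal (A B : Finset σ) (q r s t : ℕ) : Ideal (MvPolynomial σ K) :=
  sqfreeIdeal K A q * sqfreeIdeal K B r + sqfreeIdeal K A s * sqfreeIdeal K B t

/-- The two sets of variables play symmetric roles. -/
theorem mixedIdeal_swap (A B : Finset σ) (q r s t : ℕ) :
    mixedIdeal K A B q r s t = mixedIdeal K B A t s r q := by
  rw [mixedIdeal, mixedIdeal, add_comm, mul_comm (sqfreeIdeal K A s), mul_comm (sqfreeIdeal K A q)]

theorem mixedIdeal_le_ker_left {A B : Finset σ} {q r s t : ℕ} (hqs : q < s) (U : Finset σ)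
    (hU : (A \ U).card < q) : mixedIdeal K A B q r s t ≤ RingHom.ker (killVars K U) :=
  sup_le (Ideal.mul_le_left.trans (sqfreeIdeal_le_ker K U A q hU))
    (Ideal.mul_le_left.trans (sqfreeIdeal_le_ker K U A s (hU.trans hqs)))

theorem mixedIdeal_le_ker {A B : Finset σ} {q r s t : ℕ} (U : Finset σ)
    (hA : (A \ U).card < s) (hB : (B \ U).card < r) :
    mixedIdeal K A B q r s t ≤ RingHom.ker (killVars K U) :=
  sup_le (Ideal.mul_le_right.trans (sqfreeIdeal_le_ker K U B r hB))
    (Ideal.mul_le_left.trans (sqfreeIdeal_le_ker K U A s hA))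

/-- A square-free monomial in variables of `A` survives setting variables of `B` to zero. -/
theorem exists_mem_sqfreeIdeal {A B U : Finset σ} (hAB : Disjoint A B) (hU : U ⊆ B) {q : ℕ}
    (hq : q ≤ A.card) : ∃ f ∈ sqfreeIdeal K A q, killVars K U f ≠ 0 := by
  obtain ⟨a, ha, hac⟩ := Finset.exists_subset_card_eq hq
  refine ⟨∏ i ∈ a, X i, Ideal.subset_span ⟨a, ha, hac, rfl⟩, ?_⟩
  rw [Ne, killVars_prod_eq_zero_iff]
  rintro ⟨i, hi, hiU⟩
  exact Finset.disjoint_left.mp hAB (ha hi) (hU hiU)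

theorem exists_subset_sdiff_card_lt (A : Finset σ) {q : ℕ} (h0 : 0 < q) (hq : q ≤ A.card) :
    ∃ U ⊆ A, U.card = A.card + 1 - q ∧ (A \ U).card < q := by
  obtain ⟨U, hU, hUc⟩ := Finset.exists_subset_card_eq (show A.card + 1 - q ≤ A.card by omega)
  refine ⟨U, hU, hUc, ?_⟩
  rw [Finset.card_sdiff_of_subset hU]
  omega

variable {K}

/-- If `J_r` is not principal, or if `I_s` and `J_r` are principal but `q + 1 < |A|`, then regular
sequences are strictly shorter than the dimension. The first case uses the connectedness bound
for `I_q` and `J_r`, the second the bound by `dim S/I_q`. -/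
theorem exists_length_le_lt_dim {A B : Finset σ} (hAB : Disjoint A B) (hun : A ∪ B = Finset.univ)
    {q r s t : ℕ} (h0q : 0 < q) (hqs : q < s) (hsA : s ≤ A.card) (h0t : 0 < t) (htr : t < r)
    (hrB : r ≤ B.card) (h : r < B.card ∨ (s = A.card ∧ r = B.card ∧ q + 1 < A.card)) :
    ∃ c : ℕ, (∀ l : List (MvPolynomial σ K ⧸ mixedIdeal K A B q r s t), IsRegularSeq _ l →
        (∀ x ∈ l, x ∈ Ideal.map (Ideal.Quotient.mk _) (Ideal.span (Set.range X))) →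
        l.length ≤ c) ∧
      ((c + 1 : ℕ) : WithBot ℕ∞) ≤ ringKrullDim (MvPolynomial σ K ⧸ mixedIdeal K A B q r s t) := by
  classical
  have hcard : A.card + B.card = (Finset.univ : Finset σ).card := by
    rw [← hun, Finset.card_union_of_disjoint hAB]
  have hprod : sqfreeIdeal K A q * sqfreeIdeal K B r ≤ mixedIdeal K A B q r s t := le_sup_left
  obtain ⟨U, hUA, hUc, hUq⟩ := exists_subset_sdiff_card_lt A h0q (by omega)
  obtain ⟨V, hVB, hVc, hVt⟩ := exists_subset_sdiff_card_lt B h0t (by omega)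
  have hLU : mixedIdeal K A B q r s t ≤ RingHom.ker (killVars K U) :=
    mixedIdeal_le_ker_left K hqs U hUq
  have hLV : mixedIdeal K A B q r s t ≤ RingHom.ker (killVars K V) := by
    rw [mixedIdeal_swap]
    exact mixedIdeal_le_ker_left K htr V hVt
  obtain ⟨f, hf, hfV⟩ := exists_mem_sqfreeIdeal K hAB hVB (show q ≤ A.card by omega)
  obtain ⟨g, hg, hgU⟩ := exists_mem_sqfreeIdeal K hAB.symm hUA hrB
  have hfilter : ∀ P : Ideal (MvPolynomial σ K),
      (Finset.univ.filter fun i => (X i : MvPolynomial σ K) ∉ P).card ≤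
        (A.filter fun i => (X i : MvPolynomial σ K) ∉ P).card +
          (B.filter fun i => (X i : MvPolynomial σ K) ∉ P).card := by
    intro P
    rw [← hun, Finset.filter_union]
    exact Finset.card_union_le _ _
  rcases h with h | ⟨hs, hr, hq⟩
  · refine ⟨q + r - 1, fun l hl hlm => ?_, ?_⟩
    · have h1 := length_le_of_mul_le' _ _ _ hprod l hl hlm V hLV f hf hfV U hLU g hg hgU
      have h2 := ringKrullDim_quotient_le_of_forall_prime K
        (sqfreeIdeal K A q ⊔ sqfreeIdeal K B r) (q + r - 2) (fun P hP hle => by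
          have e1 := card_filter_notMem_lt_of_sqfreeIdeal_le K A q P (le_sup_left.trans hle)
          have e2 := card_filter_notMem_lt_of_sqfreeIdeal_le K B r P (le_sup_right.trans hle)
          have e3 := hfilter P
          omega)
      have h3 : (l.length : WithBot ℕ∞) ≤ ((q + r - 2 + 1 : ℕ) : WithBot ℕ∞) :=
        h1.trans (by push_cast; gcongr)
      have h4 : l.length ≤ q + r - 2 + 1 := by exact_mod_cast h3
      omega
    · refine le_trans ?_ (card_compl_le_ringKrullDim K U _ hLU)
      have : q + r - 1 + 1 ≤ Uᶜ.card := by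
        rw [Finset.card_compl, ← Finset.card_univ]
        omega
      exact_mod_cast this
  · refine ⟨q - 1 + B.card, fun l hl hlm => ?_, ?_⟩
    · have h1 := length_le_of_mul_le _ _ _ hprod l hl hlm U hLU g hg hgU
      have h2 := ringKrullDim_quotient_le_of_forall_prime K
        (sqfreeIdeal K A q) (q - 1 + B.card) (fun P hP hle => by
          have e1 := card_filter_notMem_lt_of_sqfreeIdeal_le K A q P hle
          have e2 := Finset.card_filter_le B fun i => (X i : MvPolynomial σ K) ∉ P
          have e3 := hfilter P
          omega)
      exact_mod_cast h1.trans h2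
    · obtain ⟨U', hUA', hUc', hUq'⟩ := exists_subset_sdiff_card_lt A (h0q.trans hqs) hsA
      obtain ⟨V', hVB', hVc', hVq'⟩ := exists_subset_sdiff_card_lt B (h0t.trans htr) hrB
      refine le_trans ?_ (card_compl_le_ringKrullDim K (U' ∪ V') _ (mixedIdeal_le_ker K _
        ((Finset.card_le_card (Finset.sdiff_subset_sdiff le_rfl
          Finset.subset_union_left)).trans_lt hUq')
        ((Finset.card_le_card (Finset.sdiff_subset_sdiff le_rfl
          Finset.subset_union_right)).trans_lt hVq')))
      have : q - 1 + B.card + 1 ≤ (U' ∪ V')ᶜ.card := by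
        have := Finset.card_union_le U' V'
        rw [Finset.card_compl, ← Finset.card_univ]
        omega
      exact_mod_cast this

theorem not_isCohenMacaulay {R : Type} [CommRing R] {J : Ideal R} (c : ℕ)
    (h : ∀ l : List R, IsRegularSeq R l → (∀ x ∈ l, x ∈ J) → l.length ≤ c)
    (hc : ((c + 1 : ℕ) : WithBot ℕ∞) ≤ ringKrullDim R) : ¬ IsCohenMacaulay R J := by
  intro hCM
  rw [← hCM] at hc
  have h1 : ringDepth R J ≤ (c : ℕ∞) := by
    refine sSup_le ?_
    rintro _ ⟨l, hlJ, hl, rfl⟩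
    exact_mod_cast h l hl hlJ
  have h2 : ((c + 1 : ℕ) : ℕ∞) ≤ ringDepth R J := by exact_mod_cast hc
  have h3 : c + 1 ≤ c := by exact_mod_cast h2.trans h1
  omega

/-- The Cohen–Macaulay property forces the exceptional parameters. -/
theorem eq_of_isCohenMacaulay {A B : Finset σ} (hAB : Disjoint A B) (hun : A ∪ B = Finset.univ)
    {q r s t : ℕ} (h0q : 0 < q) (hqs : q < s) (hsA : s ≤ A.card) (h0t : 0 < t) (htr : t < r)
    (hrB : r ≤ B.card) (hCM : IsCohenMacaulay (MvPolynomial σ K ⧸ mixedIdeal K A B q r s t)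
      (Ideal.map (Ideal.Quotient.mk _) (Ideal.span (Set.range X)))) :
    q = A.card - 1 ∧ r = B.card ∧ s = A.card ∧ t = B.card - 1 := by
  have h1 : ¬ (r < B.card ∨ (s = A.card ∧ r = B.card ∧ q + 1 < A.card)) := fun h => by
    obtain ⟨c, hc, hc'⟩ := exists_length_le_lt_dim (K := K) hAB hun h0q hqs hsA h0t htr hrB h
    exact not_isCohenMacaulay c hc hc' hCM
  have h2 : ¬ (s < A.card ∨ (r = B.card ∧ s = A.card ∧ t + 1 < B.card)) := fun h => by
    rw [mixedIdeal_swap] at hCM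
    obtain ⟨c, hc, hc'⟩ := exists_length_le_lt_dim (K := K) hAB.symm
      (Finset.union_comm A B ▸ hun) h0t htr hrB h0q hqs hsA h
    exact not_isCohenMacaulay c hc hc' hCM
  omega

end MixedIdeal

/-! ### A regular sequence modulo the products of all but one variable -/

section RegularSequence

/-- The inductive step for regular sequences modulo ideals of the shape
`(∏_{j ≠ k} g_j : k)`: an element `h` is a nonzerodivisor as soon as the `g_j` become pairwise
non-associated primes under a retraction `ψ` onto a complement of `(h)`. -/
theorem mem_span_prod_of_mul_mem {S ι : Type} [CommRing S] [IsDomain S] [Fintype ι]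
    [DecidableEq ι] (g : ι → S) (ψ : S →+* S) (h : S) (hh : h ≠ 0) (hψ : ψ h = 0)
    (hdiv : ∀ c, h ∣ c - ψ c) (hp : ∀ k, Prime (ψ (g k)))
    (hnd : ∀ k j, k ≠ j → ¬ ψ (g k) ∣ ψ (g j)) (a : S)
    (ha : h * a ∈ Ideal.span (Set.range fun k => ∏ j ∈ Finset.univ.erase k, g j)) :
    a ∈ Ideal.span (Set.range fun k => ∏ j ∈ Finset.univ.erase k, g j) := by
  rw [Ideal.mem_span_range_iff_exists_fun] at ha ⊢
  obtain ⟨b, hb⟩ := ha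
  have h0 : ∑ k, ψ (b k) * ∏ j ∈ Finset.univ.erase k, ψ (g j) = 0 := by
    have := congrArg ψ hb
    simpa [map_sum, map_prod, hψ] using this
  have hbk : ∀ k, ψ (g k) ∣ ψ (b k) := by
    intro k
    -- every summand other than the `k`-th one contains the factor `ψ (g k)`
    have h1 : ψ (g k) ∣ ∑ i ∈ Finset.univ.erase k, ψ (b i) *
        ∏ j ∈ Finset.univ.erase i, ψ (g j) := by
      refine Finset.dvd_sum fun i hi => Dvd.dvd.mul_left (Finset.dvd_prod_of_mem _ ?_) _
      exact Finset.mem_erase.mpr ⟨(Finset.ne_of_mem_erase hi).symm, Finset.mem_univ _⟩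
    rw [← Finset.add_sum_erase _ _ (Finset.mem_univ k)] at h0
    have h2 : ψ (g k) ∣ ψ (b k) * ∏ j ∈ Finset.univ.erase k, ψ (g j) :=
      (dvd_add_left h1).mp (h0 ▸ dvd_zero _)
    refine ((hp k).dvd_or_dvd h2).resolve_right fun h3 => ?_
    obtain ⟨j, hj, hj'⟩ := (hp k).exists_mem_finset_dvd h3
    exact hnd k j (Finset.ne_of_mem_erase hj).symm hj'
  choose c hc using hbk
  choose d hd using fun k => hdiv (b k)
  choose e he using fun k => hdiv (g k)
  have hprod : ∀ k, ψ (g k) * ∏ j ∈ Finset.univ.erase k, ψ (g j) = ∏ j, ψ (g j) := fun k =>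
    Finset.mul_prod_erase _ (fun j => ψ (g j)) (Finset.mem_univ k)
  have hc0 : ∑ k, c k = 0 := by
    have : (∑ k, c k) * ∏ j, ψ (g j) = 0 := by
      rw [Finset.sum_mul, ← h0]
      refine Finset.sum_congr rfl fun k _ => ?_
      rw [hc k, ← hprod k]
      ring
    refine (mul_eq_zero.mp this).resolve_right ?_
    exact Finset.prod_ne_zero_iff.mpr fun j _ => (hp j).ne_zero
  refine ⟨fun k => d k - e k * c k, mul_left_cancel₀ hh ?_⟩
  have hsum : ∑ k, c k * ∏ j, g j = 0 := by rw [← Finset.sum_mul, hc0, zero_mul]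
  rw [← hb, ← sub_zero (∑ k, b k * _), ← hsum, ← Finset.sum_sub_distrib, Finset.mul_sum]
  refine Finset.sum_congr rfl fun k _ => ?_
  rw [← Finset.mul_prod_erase _ _ (Finset.mem_univ k)]
  linear_combination (-∏ j ∈ Finset.univ.erase k, g j) * (hd k - c k * he k + hc k)

/-- A substitution does not change the class modulo `I` if it does not change that of the
variables. -/
theorem sub_aeval_mem {σ K : Type} [Field K] (I : Ideal (MvPolynomial σ K))
    (v : σ → MvPolynomial σ K) (hv : ∀ j, X j - v j ∈ I) (c : MvPolynomial σ K) :
    c - aeval v c ∈ I := by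
  have : (Ideal.Quotient.mkₐ K I).comp (aeval v) = Ideal.Quotient.mkₐ K I := by
    ext j
    simpa using ((Ideal.Quotient.mk_eq_mk_iff_sub_mem _ _).mpr (hv j)).symm
  exact (Ideal.Quotient.mk_eq_mk_iff_sub_mem _ _).mp (AlgHom.congr_fun this c).symm

variable (K : Type) [Field K] (d : ℕ)

/-- The polynomial `w + z ^ (k + 1)`, where `w` and `z` are the last two variables. Distinct
exponents keep these polynomials pairwise non-associated even over a finite field, where there are
too few linear forms. -/
noncomputable def lineForm (k : ℕ) : MvPolynomial (Fin (d + 2)) K :=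
  X ⟨d, by omega⟩ + X ⟨d + 1, by omega⟩ ^ (k + 1)

/-- The variables, the first `i` of them being replaced by the polynomials `lineForm`. -/
noncomputable def partialSubst (i : ℕ) (j : Fin (d + 2)) : MvPolynomial (Fin (d + 2)) K :=
  if (j : ℕ) < i then lineForm K d j else X j

variable {d}

theorem aeval_lineForm {R : Type} [CommRing R] [Algebra K R] (v : Fin (d + 2) → R) (k : ℕ) :
    aeval v (lineForm K d k) = v ⟨d, by omega⟩ + v ⟨d + 1, by omega⟩ ^ (k + 1) := by
  simp [lineForm]

/-- The substitution `w ↦ -z ^ (k + 1)` is a retraction whose kernel is generated by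
`w + z ^ (k + 1)`. -/
theorem prime_lineForm (k : ℕ) : Prime (lineForm K d k) := by
  let v : Fin (d + 2) → MvPolynomial (Fin (d + 2)) K := fun j =>
    if (j : ℕ) = d then -X ⟨d + 1, by omega⟩ ^ (k + 1) else X j
  have h0 : aeval v (lineForm K d k) = 0 := by
    rw [aeval_lineForm]
    simp [v]
  have hdvd : ∀ c, aeval v c = 0 → lineForm K d k ∣ c := by
    intro c hc
    have := sub_aeval_mem (Ideal.span {lineForm K d k}) v (fun j => by
      rw [Ideal.mem_span_singleton]
      by_cases hj : (j : ℕ) = d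
      · have : j = ⟨d, by simp⟩ := Fin.ext hj
        subst this
        simp [v, lineForm]
      · simp [v, hj]) c
    rwa [hc, sub_zero, Ideal.mem_span_singleton] at this
  refine ⟨fun h => ?_, fun h => ?_, fun a b hab => ?_⟩
  · have := aeval_lineForm K (fun j : Fin (d + 2) => if (j : ℕ) = d then (1 : K) else 0) k
    simp [h] at this
  · have := h.map (aeval v)
    rw [h0] at this
    exact not_isUnit_zero this
  · obtain ⟨c, hc⟩ := hab
    have : aeval v a * aeval v b = 0 := by rw [← map_mul, hc, map_mul, h0, zero_mul]
    exact (mul_eq_zero.mp this).imp (hdvd a) (hdvd b)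

theorem prime_partialSubst (i : ℕ) (j : Fin (d + 2)) : Prime (partialSubst K d i j) := by
  rw [partialSubst]
  split_ifs
  · exact prime_lineForm K _
  · exact MvPolynomial.X_prime

theorem not_partialSubst_dvd (i : ℕ) (k j : Fin (d + 2)) (hkj : k ≠ j) :
    ¬ partialSubst K d i k ∣ partialSubst K d i j := by
  have hkj' : (k : ℕ) ≠ j := fun h => hkj (Fin.ext h)
  -- a curve on which the first polynomial vanishes and the second one does not
  suffices ∃ v : Fin (d + 2) → Polynomial K, aeval v (partialSubst K d i k) = 0 ∧
      aeval v (partialSubst K d i j) ≠ 0 by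
    obtain ⟨v, h0, h1⟩ := this
    rintro ⟨c, hc⟩
    rw [hc, map_mul, h0, zero_mul] at h1
    exact h1 rfl
  by_cases hk : (k : ℕ) < i
  · refine ⟨fun a => if (a : ℕ) = d then -Polynomial.X ^ ((k : ℕ) + 1) else Polynomial.X, ?_, ?_⟩
    · rw [partialSubst, if_pos hk, aeval_lineForm]
      simp
    · rw [partialSubst]
      split_ifs with hj
      · rw [aeval_lineForm]
        intro h
        have h2 : (Polynomial.X : Polynomial K) ^ ((j : ℕ) + 1) = Polynomial.X ^ ((k : ℕ) + 1) := by
          simp at h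
          linear_combination h
        have := congrArg Polynomial.natDegree h2
        simp at this
        omega
      · rw [aeval_X]
        split_ifs
        · exact neg_ne_zero.mpr (pow_ne_zero _ Polynomial.X_ne_zero)
        · exact Polynomial.X_ne_zero
  · refine ⟨fun a => if a = k then 0 else if (a : ℕ) = d then 1 else Polynomial.X, ?_, ?_⟩
    · rw [partialSubst, if_neg hk, aeval_X, if_pos rfl]
    · rw [partialSubst]
      split_ifs with hj
      · rw [aeval_lineForm]
        by_cases hkd : k = ⟨d, by simp⟩
        · subst hkd
          simp
        · intro h
          have := congrArg (Polynomial.eval 0) h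
          rw [if_neg (Ne.symm hkd), if_pos rfl, if_neg (show d + 1 ≠ d by omega)] at this
          split_ifs at this <;> simp at this
      · rw [aeval_X, if_neg hkj.symm]
        split_ifs
        · exact one_ne_zero
        · exact Polynomial.X_ne_zero

theorem aeval_partialSubst_lineForm (i : ℕ) (hi : i ≤ d) (k : ℕ) :
    aeval (partialSubst K d i) (lineForm K d k) = lineForm K d k := by
  rw [aeval_lineForm, partialSubst, partialSubst, if_neg (by simpa using hi),
    if_neg (by simp; omega), lineForm]

/-- The ideal generated by the products of all but one variable. -/
noncomputable def coverIdeal (K σ : Type) [Field K] [Fintype σ] [DecidableEq σ] :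
    Ideal (MvPolynomial σ K) :=
  Ideal.span (Set.range fun k => ∏ j ∈ Finset.univ.erase k, X j)

/-- The ideal generated by the first `i` elements of the regular sequence. -/
noncomputable def seqIdeal (d i : ℕ) : Ideal (MvPolynomial (Fin (d + 2)) K) :=
  Ideal.span {x | ∃ k : Fin (d + 2), (k : ℕ) < i ∧ x = X k - lineForm K d k}

/-- Eliminating the first `i` variables identifies the quotient by the products of variables and
the first `i` elements of the sequence with a quotient by products of partially substituted
variables. -/
theorem mem_sup_seqIdeal_iff (i : ℕ) (hi : i ≤ d) (a : MvPolynomial (Fin (d + 2)) K) :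
    a ∈ coverIdeal K (Fin (d + 2)) ⊔ seqIdeal K d i ↔ aeval (partialSubst K d i) a ∈
      Ideal.span (Set.range fun k => ∏ j ∈ Finset.univ.erase k, partialSubst K d i j) := by
  have hsub : ∀ c, c - aeval (partialSubst K d i) c ∈ seqIdeal K d i := by
    refine sub_aeval_mem _ _ fun j => ?_
    rw [partialSubst]
    split_ifs with hj
    · exact Ideal.subset_span ⟨j, hj, rfl⟩
    · simp
  constructor
  · intro h
    have hle : coverIdeal K (Fin (d + 2)) ⊔ seqIdeal K d i ≤
        Ideal.comap (aeval (partialSubst K d i)) (Ideal.span (Set.range fun k =>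
          ∏ j ∈ Finset.univ.erase k, partialSubst K d i j)) := by
      refine sup_le ?_ ?_
      · rw [coverIdeal, Ideal.span_le]
        rintro _ ⟨k, rfl⟩
        refine Ideal.subset_span ⟨k, ?_⟩
        simp [map_prod]
      · rw [seqIdeal, Ideal.span_le]
        rintro _ ⟨k, hk, rfl⟩
        rw [SetLike.mem_coe, Ideal.mem_comap, map_sub, aeval_partialSubst_lineForm K i hi,
          aeval_X, partialSubst, if_pos hk, sub_self]
        exact zero_mem _
    exact hle h
  · intro h
    have hle : Ideal.span (Set.range fun k => ∏ j ∈ Finset.univ.erase k, partialSubst K d i j) ≤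
        coverIdeal K (Fin (d + 2)) ⊔ seqIdeal K d i := by
      rw [Ideal.span_le]
      rintro _ ⟨k, rfl⟩
      have h1 := hsub (∏ j ∈ Finset.univ.erase k, X j)
      simp only [map_prod, aeval_X] at h1
      have h2 : (∏ j ∈ Finset.univ.erase k, X j : MvPolynomial (Fin (d + 2)) K) ∈
        coverIdeal K (Fin (d + 2)) := Ideal.subset_span ⟨k, rfl⟩
      have := sub_mem (Ideal.mem_sup_left h2) (Ideal.mem_sup_right h1)
      rwa [sub_sub_cancel] at this
    have := add_mem (Ideal.mem_sup_right (hsub a)) (hle h)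
    rwa [sub_add_cancel] at this

theorem mem_of_mul_mem_sup_seqIdeal (i : Fin (d + 2)) (hi : (i : ℕ) < d)
    (a : MvPolynomial (Fin (d + 2)) K)
    (ha : (X i - lineForm K d i) * a ∈ coverIdeal K (Fin (d + 2)) ⊔ seqIdeal K d i) :
    a ∈ coverIdeal K (Fin (d + 2)) ⊔ seqIdeal K d i := by
  rw [mem_sup_seqIdeal_iff K i hi.le] at ha ⊢
  rw [map_mul, map_sub, aeval_partialSubst_lineForm K i hi.le, aeval_X, partialSubst,
    if_neg (lt_irrefl _)] at ha
  let v : Fin (d + 2) → MvPolynomial (Fin (d + 2)) K := fun j =>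
    if j = i then lineForm K d i else X j
  have hv : ∀ k, aeval v (lineForm K d k) = lineForm K d k := by
    intro k
    rw [aeval_lineForm]
    have h1 : (⟨d, by omega⟩ : Fin (d + 2)) ≠ i := fun h => by simp [← h] at hi
    have h2 : (⟨d + 1, by omega⟩ : Fin (d + 2)) ≠ i := fun h => by simp [← h] at hi
    simp [v, h1, h2, lineForm]
  have hg : ∀ j, aeval v (partialSubst K d i j) = partialSubst K d (i + 1) j := by
    intro j
    rw [partialSubst, partialSubst]
    rcases lt_trichotomy (j : ℕ) i with h | h | h
    · rw [if_pos h, if_pos (by omega), hv]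
    · have : j = i := Fin.ext h
      subst this
      simp [v]
    · have : j ≠ i := fun h' => by simp [h'] at h
      rw [if_neg (by omega), if_neg (by omega), aeval_X]
      simp [v, this]
  refine mem_span_prod_of_mul_mem (partialSubst K d i) (aeval v).toRingHom (X i - lineForm K d i)
    ?_ ?_ ?_ ?_ ?_ _ ha
  · intro h
    have h1 := congrArg (aeval (fun j : Fin (d + 2) => if j = i then (1 : K) else 0)) h
    rw [map_sub, aeval_lineForm] at h1
    have h1' : (⟨d, by omega⟩ : Fin (d + 2)) ≠ i := fun h => by simp [← h] at hi
    have h2' : (⟨d + 1, by omega⟩ : Fin (d + 2)) ≠ i := fun h => by simp [← h] at hi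
    simp [h1', h2'] at h1
  · change aeval v _ = 0
    rw [map_sub, hv, aeval_X]
    simp [v]
  · intro c
    rw [← Ideal.mem_span_singleton]
    refine sub_aeval_mem _ v (fun j => ?_) c
    by_cases hj : j = i
    · subst hj
      simp [v]
    · simp [v, hj]
  · intro k
    change Prime (aeval v _)
    rw [hg]
    exact prime_partialSubst K _ _
  · intro k j hkj
    change ¬ (aeval v _ ∣ aeval v _)
    rw [hg, hg]
    exact not_partialSubst_dvd K _ _ _ hkj

/-- Modulo the products of all but one of `d + 2` variables, the elements
`x_k - (w + z ^ (k + 1))` form a regular sequence. -/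
theorem exists_isRegularSeq (N : ℕ) (hN : 2 ≤ N) :
    ∃ l : List (MvPolynomial (Fin N) K ⧸ coverIdeal K (Fin N)), l.length = N - 2 ∧
      IsRegularSeq _ l ∧
      ∀ x ∈ l, x ∈ Ideal.map (Ideal.Quotient.mk _) (Ideal.span (Set.range X)) := by
  obtain ⟨d, rfl⟩ := Nat.exists_eq_add_of_le' hN
  let L := coverIdeal K (Fin (d + 2))
  let l : List (MvPolynomial (Fin (d + 2)) K ⧸ L) := List.ofFn fun k : Fin d =>
    Ideal.Quotient.mk L (X ⟨k, by omega⟩ - lineForm K d k)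
  have hspan : ∀ i, Ideal.span {x | x ∈ l.take i} ≤
      Ideal.map (Ideal.Quotient.mk L) (seqIdeal K d i) := by
    intro i
    rw [Ideal.span_le]
    intro x hx
    obtain ⟨k, hk, rfl⟩ := List.mem_take_iff_getElem.mp hx
    have hk' : k < i ∧ k < d := by simpa [l] using hk
    have hget : l[k] = Ideal.Quotient.mk L (X ⟨k, by omega⟩ - lineForm K d k) := by simp [l]
    rw [SetLike.mem_coe, hget]
    exact Ideal.mem_map_of_mem _ (Ideal.subset_span ⟨⟨k, by omega⟩, hk'.1, rfl⟩)
  have hspan' : ∀ i ≤ d, Ideal.map (Ideal.Quotient.mk L) (seqIdeal K d i) ≤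
      Ideal.span {x | x ∈ l.take i} := by
    intro i hi
    rw [seqIdeal, Ideal.map_span, Ideal.span_le]
    rintro _ ⟨_, ⟨k, hk, rfl⟩, rfl⟩
    refine Ideal.subset_span (List.mem_take_iff_getElem.mpr ⟨k, ?_, ?_⟩)
    · simp [l]; omega
    · simp [l]
  have hmax : ∀ x ∈ l, x ∈ Ideal.map (Ideal.Quotient.mk L) (Ideal.span (Set.range X)) := by
    intro x hx
    obtain ⟨k, rfl⟩ := (List.mem_ofFn' _ _).mp hx
    have hX : ∀ j, X j ∈ Ideal.span (Set.range (X : Fin (d + 2) → MvPolynomial _ K)) := fun j =>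
      Ideal.subset_span ⟨j, rfl⟩
    exact Ideal.mem_map_of_mem _ (sub_mem (hX _) (add_mem (hX _)
      (Ideal.pow_mem_of_mem _ (hX _) _ (Nat.succ_pos _))))
  refine ⟨l, by simp [l], ⟨fun i hi y hy => ?_, ?_⟩, hmax⟩
  · have hid : i < d := by simpa [l] using hi
    rw [le_antisymm (hspan i) (hspan' i hid.le)] at hy ⊢
    obtain ⟨a, rfl⟩ := Ideal.Quotient.mk_surjective y
    have hget : l.get ⟨i, hi⟩ = Ideal.Quotient.mk L (X ⟨i, by omega⟩ - lineForm K d i) := by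
      simp [l]
    rw [hget, ← map_mul, ← Ideal.mem_comap,
      Ideal.comap_map_of_surjective' _ Ideal.Quotient.mk_surjective, Ideal.mk_ker, sup_comm] at hy
    rw [← Ideal.mem_comap,
      Ideal.comap_map_of_surjective' _ Ideal.Quotient.mk_surjective, Ideal.mk_ker, sup_comm]
    exact mem_of_mul_mem_sup_seqIdeal K ⟨i, by omega⟩ hid a hy
  · intro htop
    obtain ⟨p, hp, -, hpl⟩ := exists_prime_irrelevant L (by
      change coverIdeal K _ ≤ _
      rw [coverIdeal, Ideal.span_le]
      rintro _ ⟨k, rfl⟩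
      rw [SetLike.mem_coe, RingHom.mem_ker, map_prod]
      obtain ⟨j, hj⟩ := exists_ne k
      exact Finset.prod_eq_zero (Finset.mem_erase.mpr ⟨hj, Finset.mem_univ _⟩)
        (constantCoeff_X _ _))
    apply hp.ne_top
    rw [eq_top_iff, ← htop, Ideal.span_le]
    exact fun x hx => hpl (hmax x hx)

end RegularSequence

/-! ### The exceptional parameters -/

section ExceptionalCase

set_option linter.unusedSectionVars false

variable {σ : Type} [Fintype σ] [DecidableEq σ] {K : Type} [Field K]

theorem mul_le_coverIdeal {A B : Finset σ} (hAB : Disjoint A B) (hun : A ∪ B = Finset.univ)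
    (hA : 0 < A.card) :
    sqfreeIdeal K A (A.card - 1) * sqfreeIdeal K B B.card ≤ coverIdeal K σ := by
  rw [sqfreeIdeal, sqfreeIdeal, Ideal.span_mul_span', Ideal.span_le]
  rintro _ ⟨_, ⟨a, ha, hac, rfl⟩, _, ⟨b, hb, hbc, rfl⟩, rfl⟩
  obtain rfl := Finset.eq_of_subset_of_card_le hb hbc.ge
  obtain ⟨k, hk, hka⟩ := Finset.exists_mem_notMem_of_card_lt_card (show a.card < A.card by omega)
  have hae : a = A.erase k := Finset.eq_of_subset_of_card_le
    (fun i hi => Finset.mem_erase.mpr ⟨fun h => hka (h ▸ hi), ha hi⟩)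
    (by rw [Finset.card_erase_of_mem hk, hac])
  subst hae
  refine Ideal.subset_span ⟨k, ?_⟩
  have hkb : k ∉ b := Finset.disjoint_left.mp hAB hk
  dsimp only
  rw [← Finset.prod_union (hAB.mono_left (Finset.erase_subset _ _)), ← hun,
    Finset.erase_union_distrib, Finset.erase_eq_of_notMem hkb]

theorem prod_erase_mem_mul {A B : Finset σ} (hAB : Disjoint A B) (hun : A ∪ B = Finset.univ)
    {k : σ} (hk : k ∈ A) : (∏ j ∈ Finset.univ.erase k, X j : MvPolynomial σ K) ∈
      sqfreeIdeal K A (A.card - 1) * sqfreeIdeal K B B.card := by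
  have hkb : k ∉ B := Finset.disjoint_left.mp hAB hk
  rw [← hun, Finset.erase_union_distrib, Finset.erase_eq_of_notMem hkb,
    Finset.prod_union (hAB.mono_left (Finset.erase_subset _ _))]
  exact Ideal.mul_mem_mul
    (Ideal.subset_span ⟨_, Finset.erase_subset _ _, Finset.card_erase_of_mem hk, rfl⟩)
    (Ideal.subset_span ⟨_, Finset.Subset.refl _, rfl, rfl⟩)

/-- In the exceptional case both summands consist of products of all but one variable, the missing
one lying in `A` for the first summand and in `B` for the second. -/
theorem mixedIdeal_eq_coverIdeal {A B : Finset σ} (hAB : Disjoint A B)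
    (hun : A ∪ B = Finset.univ) (hA : 0 < A.card) (hB : 0 < B.card) :
    mixedIdeal K A B (A.card - 1) B.card A.card (B.card - 1) = coverIdeal K σ := by
  have hun' : B ∪ A = Finset.univ := Finset.union_comm A B ▸ hun
  refine le_antisymm (sup_le (mul_le_coverIdeal hAB hun hA) ?_) ?_
  · rw [mul_comm]
    exact mul_le_coverIdeal hAB.symm hun' hB
  · rw [coverIdeal, Ideal.span_le]
    rintro _ ⟨k, rfl⟩
    rcases Finset.mem_union.mp (hun ▸ Finset.mem_univ k) with hk | hk
    · exact Ideal.mem_sup_left (prod_erase_mem_mul hAB hun hk)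
    · refine Ideal.mem_sup_right ?_
      rw [mul_comm]
      exact prod_erase_mem_mul hAB.symm hun' hk

theorem ringKrullDim_quotient_mixedIdeal {A B : Finset σ} (hAB : Disjoint A B)
    (hun : A ∪ B = Finset.univ) (hA : 2 ≤ A.card) (hB : 2 ≤ B.card) :
    ringKrullDim (MvPolynomial σ K ⧸ mixedIdeal K A B (A.card - 1) B.card A.card (B.card - 1)) =
      ((A.card + B.card - 2 : ℕ) : WithBot ℕ∞) := by
  classical
  have hcard : A.card + B.card = (Finset.univ : Finset σ).card := by
    rw [← hun, Finset.card_union_of_disjoint hAB]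
  refine le_antisymm (ringKrullDim_quotient_le_of_forall_prime K _ _ fun P hP hle => ?_) ?_
  · have e1 := card_filter_notMem_lt_of_sqfreeIdeal_le K A (A.card - 1) P
    have e2 := card_filter_notMem_lt_of_sqfreeIdeal_le K B B.card P
    have e3 := card_filter_notMem_lt_of_sqfreeIdeal_le K A A.card P
    have e4 := card_filter_notMem_lt_of_sqfreeIdeal_le K B (B.card - 1) P
    have h1 := hP.mul_le.mp (le_sup_left.trans hle)
    have h2 := hP.mul_le.mp (le_sup_right.trans hle)
    have e5 := Finset.card_filter_le A fun i => (X i : MvPolynomial σ K) ∉ P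
    have e6 := Finset.card_filter_le B fun i => (X i : MvPolynomial σ K) ∉ P
    have e7 : (Finset.univ.filter fun i => (X i : MvPolynomial σ K) ∉ P).card ≤
        (A.filter fun i => (X i : MvPolynomial σ K) ∉ P).card +
          (B.filter fun i => (X i : MvPolynomial σ K) ∉ P).card := by
      rw [← hun, Finset.filter_union]
      exact Finset.card_union_le _ _
    -- modulo `P` either two variables of one set vanish, or one variable of each set
    rcases h1 with h1 | h1
    · have := e1 h1
      omega
    · have := e2 h1
      rcases h2 with h2 | h2
      · have := e3 h2
        omega
      · have := e4 h2
        omega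
  · obtain ⟨a, ha⟩ := Finset.card_pos.mp (show 0 < A.card by omega)
    obtain ⟨b, hb⟩ := Finset.card_pos.mp (show 0 < B.card by omega)
    refine le_trans ?_ (card_compl_le_ringKrullDim K {a, b} _ (mixedIdeal_le_ker K _
      (Finset.card_lt_card ?_) (Finset.card_lt_card ?_)))
    · have : A.card + B.card - 2 ≤ ({a, b} : Finset σ)ᶜ.card := by
        have := Finset.card_le_two (a := a) (b := b)
        rw [Finset.card_compl, ← Finset.card_univ]
        omega
      exact_mod_cast this
    · exact sdiff_lt_left.mpr (Finset.not_disjoint_iff.mpr ⟨a, by simp, ha⟩)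
    · exact sdiff_lt_left.mpr (Finset.not_disjoint_iff.mpr ⟨b, by simp, hb⟩)

theorem length_le_ringKrullDim (L : Ideal (MvPolynomial σ K)) (U : Finset σ)
    (hL : L ≤ RingHom.ker (killVars K U)) (l : List (MvPolynomial σ K ⧸ L))
    (hl : IsRegularSeq _ l)
    (hlm : ∀ x ∈ l, x ∈ Ideal.map (Ideal.Quotient.mk L) (Ideal.span (Set.range X))) :
    (l.length : WithBot ℕ∞) ≤ ringKrullDim (MvPolynomial σ K ⧸ L) :=
  length_le_of_mul_le L L ⊤ Ideal.mul_le_left l hl hlm U hL 1 trivial (by simp)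

theorem isCohenMacaulay_of_regularSeq (L : Ideal (MvPolynomial σ K)) (U : Finset σ)
    (hL : L ≤ RingHom.ker (killVars K U)) (c : ℕ)
    (hdim : ringKrullDim (MvPolynomial σ K ⧸ L) = (c : WithBot ℕ∞))
    (h : ∃ l : List (MvPolynomial σ K ⧸ L), l.length = c ∧ IsRegularSeq _ l ∧
      ∀ x ∈ l, x ∈ Ideal.map (Ideal.Quotient.mk L) (Ideal.span (Set.range X))) :
    IsCohenMacaulay (MvPolynomial σ K ⧸ L)
      (Ideal.map (Ideal.Quotient.mk L) (Ideal.span (Set.range X))) := by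
  have : ringDepth (MvPolynomial σ K ⧸ L)
      (Ideal.map (Ideal.Quotient.mk L) (Ideal.span (Set.range X))) = (c : ℕ∞) := by
    refine le_antisymm (sSup_le ?_) ?_
    · rintro _ ⟨l, hlm, hl, rfl⟩
      have := length_le_ringKrullDim L U hL l hl hlm
      rw [hdim] at this
      exact_mod_cast this
    · obtain ⟨l, hlc, hl, hlm⟩ := h
      exact le_sSup ⟨l, hlm, hl, by rw [hlc]⟩
  rw [IsCohenMacaulay, this, hdim]
  rfl

end ExceptionalCase

/-! ### The theorem -/

theorem Iq_eq_sqfreeIdeal (K : Type) [Field K] (n m q : ℕ) :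
    Iq K n m q = sqfreeIdeal K (Finset.univ.filter fun i : Fin (n + m) => (i : ℕ) < n) q := by
  simp [Iq, sqfreeIdeal, Finset.subset_iff]

theorem Jr_eq_sqfreeIdeal (K : Type) [Field K] (n m r : ℕ) :
    Jr K n m r = sqfreeIdeal K (Finset.univ.filter fun i : Fin (n + m) => n ≤ (i : ℕ)) r := by
  simp [Jr, sqfreeIdeal, Finset.subset_iff]

/-- Proposition 4.2(4): for `0 < q < s ≤ n`, `0 < t < r ≤ m`, `S/(I_q J_r + I_s J_t)` is
Cohen–Macaulay if and only if `q = n-1`, `r = m`, `s = n`, `t = m-1`, in which case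
`dim S/(I_{n-1} J_m + I_n J_{m-1}) = m + n - 2`. -/
theorem cm_mixed (K : Type) [Field K] (n m q r s t : ℕ)
    (h0q : 0 < q) (hqs : q < s) (hsn : s ≤ n) (h0t : 0 < t) (htr : t < r) (hrm : r ≤ m) :
    (IsCohenMacaulay
        (MvPolynomial (Fin (n + m)) K ⧸ (Iq K n m q * Jr K n m r + Iq K n m s * Jr K n m t))
        (irrelevantMax K (n + m) (Iq K n m q * Jr K n m r + Iq K n m s * Jr K n m t)) ↔
      q = n - 1 ∧ r = m ∧ s = n ∧ t = m - 1) ∧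
      ringKrullDim (MvPolynomial (Fin (n + m)) K ⧸
          (Iq K n m (n - 1) * Jr K n m m + Iq K n m n * Jr K n m (m - 1))) =
        ((m + n - 2 : ℕ) : WithBot ℕ∞) := by
  let A : Finset (Fin (n + m)) := Finset.univ.filter fun i => (i : ℕ) < n
  let B : Finset (Fin (n + m)) := Finset.univ.filter fun i => n ≤ (i : ℕ)
  have hAB : Disjoint A B := by
    rw [Finset.disjoint_filter]
    intro i _ h
    omega
  have hun : A ∪ B = Finset.univ := by
    ext i
    simp [A, B, lt_or_ge]
  have hA : A.card = n := by
    have := Fin.card_filter_val_lt (n := n + m) (m := n)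
    simpa [A] using this
  have hB : B.card = m := by
    have := Finset.card_union_of_disjoint hAB
    rw [hun, Finset.card_univ, Fintype.card_fin] at this
    omega
  have hL : ∀ q r s t, Iq K n m q * Jr K n m r + Iq K n m s * Jr K n m t =
      mixedIdeal K A B q r s t := by
    intro q r s t
    rw [mixedIdeal, Iq_eq_sqfreeIdeal, Iq_eq_sqfreeIdeal, Jr_eq_sqfreeIdeal, Jr_eq_sqfreeIdeal]
  have hdim := ringKrullDim_quotient_mixedIdeal (K := K) hAB hun (by omega) (by omega)
  have hcover := mixedIdeal_eq_coverIdeal (K := K) hAB hun (by omega) (by omega)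
  have hker : mixedIdeal K A B q r s t ≤ RingHom.ker (killVars K A) :=
    mixedIdeal_le_ker_left K hqs A (by simpa using h0q)
  rw [hA, hB] at hdim hcover
  rw [irrelevantMax, hL, hL]
  refine ⟨⟨fun hCM => ?_, ?_⟩, by rw [hdim, add_comm]⟩
  · have := eq_of_isCohenMacaulay hAB hun h0q hqs (by omega) h0t htr (by omega) hCM
    rwa [hA, hB] at this
  · rintro ⟨rfl, rfl, rfl, rfl⟩
    refine isCohenMacaulay_of_regularSeq _ A hker _ hdim ?_
    rw [hcover]
    exact exists_isRegularSeq K _ (by omega)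
end
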